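/- arXiv:2109.10331 — 2 statements merged into one kernel-verified Lean document; each statement's English description precedes it below -/
import Mathlib

section
/- Fix an integer κ ≥ 1. For each M ≥ 1 set N = M + κ and let A be the top-left M×M truncation of a Haar orthogonal matrix from O(N). Then, as M → ∞, the law of log|det(A)| + (κ/2)·log(M/2) (the pushforward of the Haar probability measure under this map) converges weakly to the law of (1/2)·∑_{j=0}^{κ−1} log Γ_j, where Γ_0, …, Γ_{κ−1} are independent and Γ_j has the Gamma distribution with shape parameter (1+j)/2 and rate 1; i.e. the limit law is the pushforward of the product measure ⊗_{j=0}^{κ−1} Gamma((1+j)/2, 1) on (0,∞)^κ under the map t ↦ (1/2)·∑_{j=0}^{κ−1} log t_j. -/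
open MeasureTheory Matrix Filter ProbabilityTheory

noncomputable section

/-- Borel measurable structure on the orthogonal group. -/
instance (N : ℕ) : MeasurableSpace (Matrix.orthogonalGroup (Fin N) ℝ) := borel _

/-- The top-left `M × M` truncation of an `N × N` orthogonal matrix. -/
def truncO (N M : ℕ) (h : M ≤ N) (U : Matrix.orthogonalGroup (Fin N) ℝ) :
    Matrix (Fin M) (Fin M) ℝ :=
  Matrix.submatrix (U : Matrix (Fin N) (Fin N) ℝ) (Fin.castLE h) (Fin.castLE h)

/-- standard Gaussian vector -/
def gV (ι : Type) [Fintype ι] : Measure (ι → ℝ) := Measure.pi fun _ => gaussianReal 0 1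

instance gV_prob (ι : Type) [Fintype ι] : IsProbabilityMeasure (gV ι) := by unfold gV; infer_instance

/-- standard Gaussian matrix -/
def gM (m ι : Type) [Fintype m] [Fintype ι] : Measure (m → ι → ℝ) := Measure.pi fun _ => gV ι

instance gM_prob (m ι : Type) [Fintype m] [Fintype ι] : IsProbabilityMeasure (gM m ι) := by
  unfold gM; infer_instance

lemma abs_det_blocks {m n : Type} [Fintype m] [Fintype n] [DecidableEq m] [DecidableEq n]
    (U : Matrix (m ⊕ n) (m ⊕ n) ℝ) (hU : U * Uᵀ = 1) :
    |U.toBlocks₁₁.det| = |U.toBlocks₂₂.det| := by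
  have hd : |U.det| = 1 := by
    have := congrArg Matrix.det hU
    rw [Matrix.det_mul, Matrix.det_transpose, Matrix.det_one] at this
    rcases mul_self_eq_one_iff.mp this with h | h <;> simp [h]
  have hb := hU
  rw [← Matrix.fromBlocks_toBlocks U, Matrix.fromBlocks_transpose, Matrix.fromBlocks_multiply,
    ← Matrix.fromBlocks_one, Matrix.fromBlocks_inj] at hb
  obtain ⟨_, h2, _, h4⟩ := hb
  have key : U * Matrix.fromBlocks 1 U.toBlocks₂₁ᵀ 0 U.toBlocks₂₂ᵀ
      = Matrix.fromBlocks U.toBlocks₁₁ 0 U.toBlocks₂₁ 1 := by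
    conv_lhs => rw [← Matrix.fromBlocks_toBlocks U]
    rw [Matrix.fromBlocks_multiply]
    simp only [Matrix.toBlocks_fromBlocks₂₁, Matrix.toBlocks_fromBlocks₂₂] at *
    simp [h2, h4]
  have := congrArg Matrix.det key
  rw [Matrix.det_mul, Matrix.det_fromBlocks_zero₂₁, Matrix.det_fromBlocks_zero₁₂] at this
  simp only [Matrix.det_one, one_mul, mul_one, Matrix.det_transpose] at this
  rw [← this, abs_mul, hd, one_mul]

lemma exists_orth_tri {n : ℕ} (W : Matrix (Fin n) (Fin n) ℝ) :
    ∃ V ∈ Matrix.orthogonalGroup (Fin n) ℝ, ∀ i j, i < j → (W * V) i j = 0 := by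
  let f : Fin n → EuclideanSpace ℝ (Fin n) := fun i => WithLp.toLp 2 (W i)
  let b := InnerProductSpace.gramSchmidtOrthonormalBasis (𝕜 := ℝ) (ι := Fin n) (by simp) f
  refine ⟨Matrix.of fun i j => b j i, ?_, ?_⟩
  · rw [Matrix.mem_orthogonalGroup_iff']
    ext i j
    have := orthonormal_iff_ite.mp b.orthonormal i j
    rw [Matrix.mul_apply, Matrix.one_apply, ← this]
    simp [PiLp.inner_apply, mul_comm]
  · intro i j hij
    have := InnerProductSpace.gramSchmidtOrthonormalBasis_inv_triangular (𝕜 := ℝ) (ι := Fin n) (by simp) f hij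
    rw [Matrix.mul_apply, ← this]
    simp [PiLp.inner_apply, f, b]

lemma exists_orth_tri' {n : ℕ} (W : Matrix (Fin n) (Fin n) ℝ) :
    ∃ V ∈ Matrix.orthogonalGroup (Fin n) ℝ, ∀ i j, j < i → (W * V) i j = 0 := by
  obtain ⟨V, hV, h⟩ := exists_orth_tri (W.submatrix Fin.rev id)
  refine ⟨V.submatrix id Fin.rev, ?_, ?_⟩
  · rw [Matrix.mem_orthogonalGroup_iff] at hV ⊢
    rw [← hV]
    ext i j
    simp only [Matrix.mul_apply, Matrix.transpose_apply, Matrix.submatrix_apply, id]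
    exact Equiv.sum_comp Fin.revPerm (fun k => V i k * V j k)
  · intro i j hij
    have := h i.rev j.rev (by simpa using hij)
    simpa [Matrix.mul_apply] using this

lemma rotV {ι : Type} [Fintype ι] [DecidableEq ι] (V : Matrix ι ι ℝ)
    (hV : V ∈ Matrix.orthogonalGroup ι ℝ) :
    MeasurePreserving (fun x : ι → ℝ => x ᵥ* V) (gV ι) (gV ι) := by
  refine ⟨by fun_prop, ?_⟩
  have hV' : V * Vᵀ = 1 := (Matrix.mem_orthogonalGroup_iff ι ℝ).mp hV
  have hinj : Function.Injective (fun μ : Measure (ι → ℝ) => μ.map (WithLp.toLp 2)) :=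
    fun μ ν h => by
      have := congrArg (fun ρ => ρ.map (WithLp.ofLp (p := 2))) h
      simp only at this
      rw [Measure.map_map (by fun_prop) (by fun_prop), Measure.map_map (by fun_prop) (by fun_prop)] at this
      simpa [Function.comp_def] using this
  apply hinj
  simp only
  rw [Measure.map_map (by fun_prop) (by fun_prop), gV, map_pi_eq_stdGaussian]
  symm
  let f : ι → EuclideanSpace ℝ ι := fun i => WithLp.toLp 2 (V i)
  have hon : Orthonormal ℝ f := by
    rw [orthonormal_iff_ite]
    intro i j
    rw [← Matrix.one_apply, ← hV', Matrix.mul_apply]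
    simp [PiLp.inner_apply, f, mul_comm]
  let b : OrthonormalBasis ι ℝ (EuclideanSpace ℝ ι) :=
    OrthonormalBasis.mk hon (hon.linearIndependent.span_eq_top_of_card_eq_finrank' (by simp)).ge
  rw [stdGaussian_eq_map_pi_orthonormalBasis b]
  congr 1
  ext x i
  simp [b, f, Matrix.vecMul, dotProduct]

lemma rotM {m ι : Type} [Fintype m] [Fintype ι] [DecidableEq ι] (V : Matrix ι ι ℝ)
    (hV : V ∈ Matrix.orthogonalGroup ι ℝ) :
    MeasurePreserving (fun (W : m → ι → ℝ) (i : m) => W i ᵥ* V) (gM m ι) (gM m ι) := by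
  exact measurePreserving_pi (fun _ : m => gV ι) (fun _ : m => gV ι) (fun _ => rotV V hV)


lemma integral_gauss_sq (t : ℝ) :
    ∫ x, Real.exp (t * (x^2/2)) ∂(gaussianReal 0 1) = √(1 / (1 - t)) := by
  rw [integral_gaussianReal_eq_integral_smul (by simp)]
  have h := integral_gaussian ((1 - t)/2)
  have h1 : ∀ x : ℝ, gaussianPDFReal 0 1 x • Real.exp (t * (x^2/2))
     = (√(2 * Real.pi))⁻¹ * Real.exp (-((1 - t)/2) * x^2) := by
    intro x
    rw [gaussianPDFReal, smul_eq_mul, mul_assoc, ← Real.exp_add]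
    congr 2
    · simp
    · simp; ring
  simp_rw [h1]
  rw [integral_const_mul, h]
  have : Real.pi / ((1 - t)/2) = (2*Real.pi) * (1 / (1 - t)) := by
    rw [div_div_eq_mul_div]; ring
  rw [this, Real.sqrt_mul (by positivity : 0 ≤ 2 * Real.pi), ← mul_assoc, inv_mul_cancel₀ (by positivity), one_mul]

lemma mgf_gauss (n : ℕ) (t : ℝ) :
    mgf (fun x : Fin n → ℝ => (∑ i, x i ^ 2) / 2) (gV (Fin n)) t = √(1 / (1 - t)) ^ n := by
  rw [mgf, gV]
  have : ∀ x : Fin n → ℝ, Real.exp (t * ((∑ i, x i ^ 2) / 2)) = ∏ i, Real.exp (t * (x i ^2 /2)) := by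
    intro x
    rw [← Real.exp_sum, ← Finset.mul_sum, Finset.sum_div]
  simp_rw [this]
  rw [integral_fintype_prod_eq_prod (fun (_ : Fin n) (x : ℝ) => Real.exp (t * (x ^2 /2)))]
  simp [integral_gauss_sq]

lemma integral_gamma (a : ℝ) (ha : 0 < a) (g : ℝ → ℝ) :
    ∫ x, g x ∂(gammaMeasure a 1)
      = ∫ x in Set.Ioi 0, (1 / Real.Gamma a) * (x ^ (a - 1) * Real.exp (-x) * g x) := by
  rw [gammaMeasure, integral_withDensity_eq_integral_toReal_smul (by unfold gammaPDF; fun_prop)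
    (by simp [gammaPDF]), ← integral_Ici_eq_integral_Ioi,
    ← integral_indicator measurableSet_Ici]
  congr 1
  ext x
  by_cases hx : 0 ≤ x
  · rw [gammaPDF, ENNReal.toReal_ofReal (gammaPDFReal_nonneg ha one_pos x), Set.indicator_of_mem (by exact hx)]
    simp [gammaPDFReal, hx]; ring
  · rw [gammaPDF_of_neg (not_le.mp hx), Set.indicator_of_notMem (by exact hx)]
    simp

lemma mgf_gamma (a : ℝ) (ha : 0 < a) (t : ℝ) :
    mgf id (gammaMeasure a 1) t = if t < 1 then (1 / (1 - t)) ^ a else 0 := by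
  have hG := Real.Gamma_pos_of_pos ha
  rw [mgf, integral_gamma a ha, integral_const_mul]
  split_ifs with h
  · have := Real.integral_rpow_mul_exp_neg_mul_Ioi ha (sub_pos.mpr h)
    have h2 : ∀ x : ℝ, x ^ (a-1) * Real.exp (-x) * Real.exp (t * id x) = x ^ (a - 1) * Real.exp (-((1-t) * x)) := by
      intro x
      rw [mul_assoc, ← Real.exp_add]
      congr 2
      simp; ring
    simp_rw [h2]
    rw [this]
    field_simp
  · rw [integral_undef, mul_zero]
    intro hi
    apply not_integrableOn_Ioi_rpow (a - 1)
    refine Integrable.mono' hi ?_ ?_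
    · exact (measurable_id.pow_const _).aestronglyMeasurable
    · refine (ae_restrict_iff' measurableSet_Ioi).mpr (ae_of_all _ fun x hx => ?_)
      have hx : 0 < x := hx
      have h0 : 0 < x ^ (a-1) := Real.rpow_pos_of_pos hx _
      rw [Real.norm_of_nonneg h0.le, mul_assoc, ← Real.exp_add]
      apply le_mul_of_one_le_right h0.le
      apply Real.one_le_exp
      simp only [id]
      nlinarith

lemma map_gauss_sq (k : ℕ) :
    (gV (Fin (k+1))).map (fun x => (∑ i, x i ^ 2) / 2) = gammaMeasure ((1 + (k:ℝ)) / 2) 1 := by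
  have ha : 0 < (1 + (k:ℝ)) / 2 := by positivity
  have := isProbabilityMeasure_gammaMeasure ha one_pos
  have hm : mgf (fun x : Fin (k+1) → ℝ => (∑ i, x i ^ 2) / 2) (gV (Fin (k+1)))
      = mgf id (gammaMeasure ((1 + (k:ℝ)) / 2) 1) := by
    ext t
    rw [mgf_gauss, mgf_gamma _ ha]
    split_ifs with h
    · have : 0 < 1 / (1 - t) := by simpa using h
      rw [Real.sqrt_eq_rpow, ← Real.rpow_natCast, ← Real.rpow_mul this.le]
      congr 1
      push_cast; ring
    · have : 1 / (1 - t) ≤ 0 := by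
        apply div_nonpos_of_nonneg_of_nonpos <;> linarith
      rw [Real.sqrt_eq_zero_of_nonpos this]
      simp
  have hmeas : AEMeasurable (fun x : Fin (k+1) → ℝ => (∑ i, x i ^ 2) / 2) (gV (Fin (k+1))) :=
    Measurable.aemeasurable (by fun_prop)
  have hE := eqOn_complexMGF_of_mgf hm
  have hsub : Set.Iio (1:ℝ) ⊆ integrableExpSet (fun x : Fin (k+1) → ℝ => (∑ i, x i ^ 2) / 2) (gV (Fin (k+1))) := by
    intro t ht
    have ht : t < 1 := ht
    by_contra hni
    have h0 : mgf (fun x : Fin (k+1) → ℝ => (∑ i, x i ^ 2) / 2) (gV (Fin (k+1))) t = 0 := integral_undef hni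
    rw [mgf_gauss] at h0
    have : 0 < 1 / (1 - t) := by simpa using ht
    have : 0 < √(1 / (1 - t)) ^ (k+1) := by positivity
    linarith
  have h0 : (0:ℝ) ∈ interior (integrableExpSet (fun x : Fin (k+1) → ℝ => (∑ i, x i ^ 2) / 2) (gV (Fin (k+1)))) :=
    interior_mono hsub (by simp)
  have : IsProbabilityMeasure ((gV (Fin (k+1))).map (fun x => (∑ i, x i ^ 2) / 2)) :=
    Measure.isProbabilityMeasure_map hmeas
  apply Measure.ext_of_charFun
  ext t
  have := hE (x := t * Complex.I) (by simpa using h0)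
  rw [complexMGF_mul_I hmeas, complexMGF_mul_I (by fun_prop)] at this
  simpa using this

lemma mp_tail (k : ℕ) : MeasurePreserving (fun (x : Fin (k+1) → ℝ) (j : Fin k) => x j.succ)
    (gV (Fin (k+1))) (gV (Fin k)) :=
  measurePreserving_snd.comp
    (measurePreserving_piFinSuccAbove (fun _ : Fin (k+1) => gaussianReal 0 1) 0)

lemma lintegral_det_cons (k : ℕ) (r : Fin (k+1) → ℝ) (g : ℝ → ENNReal) (hg : Measurable g) :
    ∫⁻ R, g ((Matrix.of (Fin.cons r R : Fin (k+1) → Fin (k+1) → ℝ)).det ^ 2) ∂(gM (Fin k) (Fin (k+1)))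
      = ∫⁻ Y, g ((∑ i, r i ^ 2) * (Matrix.of Y).det ^ 2) ∂(gM (Fin k) (Fin k)) := by
  obtain ⟨V, hV, h⟩ := exists_orth_tri (Matrix.of (Fin.cons r 0 : Fin (k+1) → Fin (k+1) → ℝ))
  have hV1 : V * Vᵀ = 1 := (Matrix.mem_orthogonalGroup_iff _ ℝ).mp hV
  have hVd : V.det ^ 2 = 1 := by
    have := congrArg Matrix.det hV1
    rwa [Matrix.det_mul, Matrix.det_transpose, Matrix.det_one, ← sq] at this
  have hr : ∀ j : Fin k, (r ᵥ* V) j.succ = 0 := by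
    intro j
    have := h 0 j.succ (Fin.succ_pos j)
    simpa [Matrix.mul_apply, Matrix.vecMul, dotProduct] using this
  have hs : (r ᵥ* V) 0 ^ 2 = ∑ i, r i ^ 2 := by
    have h1 : (r ᵥ* V) ⬝ᵥ (r ᵥ* V) = r ⬝ᵥ r := by
      rw [← Matrix.mulVec_transpose V r, Matrix.dotProduct_mulVec, Matrix.vecMul_mulVec]
      simp [hV1]
    simp only [dotProduct, Fin.sum_univ_succ (fun i => (r ᵥ* V) i * (r ᵥ* V) i), hr] at h1
    simp only [sq]
    simpa using h1
  have hdet : ∀ R : Fin k → Fin (k+1) → ℝ,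
      (Matrix.of (Fin.cons r R : Fin (k+1) → Fin (k+1) → ℝ)).det ^ 2
      = (∑ i, r i ^ 2) * (Matrix.of (fun (i j : Fin k) => (R i ᵥ* V) j.succ)).det ^ 2 := by
    intro R
    have e1 : (Matrix.of (Fin.cons r R : Fin (k+1) → Fin (k+1) → ℝ) * V).det
        = (r ᵥ* V) 0 * (Matrix.of (fun (i j : Fin k) => (R i ᵥ* V) j.succ)).det := by
      rw [Matrix.det_succ_row_zero, Fin.sum_univ_succ]
      have hrow : ∀ j, (Matrix.of (Fin.cons r R : Fin (k+1) → Fin (k+1) → ℝ) * V) 0 j = (r ᵥ* V) j := by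
        intro j; simp [Matrix.mul_apply, Matrix.vecMul, dotProduct]
      simp only [hrow, hr]
      simp
      left
      congr 1
    rw [← hs, ← mul_pow, ← e1, Matrix.det_mul, mul_pow, hVd, mul_one]
  simp_rw [hdet]
  have hT : MeasurePreserving (fun (R : Fin k → Fin (k+1) → ℝ) (i j : Fin k) => (R i ᵥ* V) j.succ)
      (gM (Fin k) (Fin (k+1))) (gM (Fin k) (Fin k)) :=
    (measurePreserving_pi (fun _ : Fin k => gV (Fin (k+1))) (fun _ : Fin k => gV (Fin k))
      (fun _ => mp_tail k)).comp (rotM V hV)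
  refine hT.lintegral_comp (f := fun Y => g ((∑ i, r i ^ 2) * (Matrix.of Y).det ^ 2)) ?_
  apply hg.comp
  apply Continuous.measurable
  have : Continuous fun Y : Fin k → Fin k → ℝ => (Matrix.of Y).det := Continuous.matrix_det continuous_id
  fun_prop

lemma measurable_det_of {n : Type} [Fintype n] [DecidableEq n] :
    Measurable fun Y : n → n → ℝ => (Matrix.of Y).det := by
  have : Continuous fun Y : n → n → ℝ => (Matrix.of Y).det := Continuous.matrix_det continuous_id
  exact this.measurable

instance gamma_prob (j : ℕ) : IsProbabilityMeasure (gammaMeasure ((1 + (j:ℝ)) / 2) 1) :=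
  isProbabilityMeasure_gammaMeasure (by positivity) one_pos

lemma map_det_sq (k : ℕ) :
    (gM (Fin k) (Fin k)).map (fun X => (Matrix.of X).det ^ 2 / 2 ^ k)
      = (Measure.pi fun j : Fin k => gammaMeasure ((1 + (j:ℝ)) / 2) 1).map (fun t => ∏ j, t j) := by
  induction k with
  | zero =>
    have : (fun X : Fin 0 → Fin 0 → ℝ => (Matrix.of X).det ^ 2 / 2 ^ 0) = fun _ => 1 := by
      ext; simp
    rw [this]
    simp [Measure.map_const]
  | succ k ih =>
    have md := fun n : ℕ => measurable_det_of (n := Fin n)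
    refine Measure.ext_of_lintegral _ fun g hg => ?_
    rw [lintegral_map hg (by have := md (k+1); fun_prop), lintegral_map hg (by fun_prop)]
    have hL := (measurePreserving_piFinSuccAbove (fun _ : Fin (k+1) => gV (Fin (k+1))) 0).symm
    have hR := (measurePreserving_piFinSuccAbove (fun j : Fin (k+1) => gammaMeasure ((1 + (j:ℝ)) / 2) 1) (Fin.last k)).symm
    rw [gM, ← hL.lintegral_comp (by have := md (k+1); fun_prop), ← hR.lintegral_comp (by fun_prop),
      lintegral_prod _ (by
        apply Measurable.aemeasurable; have := md (k+1)
        exact (by fun_prop : Measurable fun X : Fin (k+1) → Fin (k+1) → ℝ => g ((Matrix.of X).det ^ 2 / 2 ^ (k+1))).comp (MeasurableEquiv.measurable _)),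
      lintegral_prod _ (by
        apply Measurable.aemeasurable
        exact (by fun_prop : Measurable fun X : Fin (k+1) → ℝ => g (∏ j, X j)).comp (MeasurableEquiv.measurable _))]
    have e1 : ∀ r : Fin (k+1) → ℝ, ∫⁻ R, g ((Matrix.of ((MeasurableEquiv.piFinSuccAbove (fun _ : Fin (k+1) => Fin (k+1) → ℝ) 0).symm (r, R))).det ^ 2 / 2 ^ (k+1)) ∂(gM (Fin k) (Fin (k+1)))
      = ∫⁻ y, g ((∑ i, r i ^ 2) / 2 * y) ∂((Measure.pi fun j : Fin k => gammaMeasure ((1 + (j:ℝ)) / 2) 1).map (fun t => ∏ j, t j)) := by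
      intro r
      rw [← ih, lintegral_map (by fun_prop) (by have := md k; fun_prop)]
      have := lintegral_det_cons k r (fun x => g (x / 2^(k+1))) (by fun_prop)
      convert this using 4
      · simp [MeasurableEquiv.piFinSuccAbove, Fin.consEquiv]
      · ring
    have e2 := fun r => e1 r
    unfold gM at e2
    simp only [e2]
    rw [← lintegral_map (f := fun s => ∫⁻ y, g (s * y) ∂((Measure.pi fun j : Fin k => gammaMeasure ((1 + (j:ℝ)) / 2) 1).map (fun t => ∏ j, t j))) (g := fun r : Fin (k+1) → ℝ => (∑ i, r i ^ 2) / 2), map_gauss_sq]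
    · simp only [Fin.val_last]
      congr 1
      ext s
      rw [lintegral_map (by fun_prop) (by fun_prop)]
      have hv : ∀ j : Fin k, (((Fin.last k).succAbove j : Fin (k+1)) : ℕ) = j := by simp
      simp only [hv]
      congr 1
      ext t
      congr 1
      rw [Fin.prod_univ_succAbove _ (Fin.last k)]
      simp [MeasurableEquiv.piFinSuccAbove]
    · have : IsProbabilityMeasure ((Measure.pi fun j : Fin k => gammaMeasure ((1 + (j:ℝ)) / 2) 1).map (fun t => ∏ j, t j)) :=
        Measure.isProbabilityMeasure_map (Measurable.aemeasurable (by fun_prop))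
      exact Measurable.lintegral_prod_right' (f := fun p : ℝ × ℝ => g (p.1 * p.2)) (by fun_prop)
    · fun_prop

lemma mp_swap (m n : Type) [Fintype m] [Fintype n] :
    MeasurePreserving (fun (W : m → n → ℝ) (j : n) (i : m) => W i j) (gM m n) (gM n m) := by
  have h1 : ∀ (a b : Type) [Fintype a] [Fintype b],
      (gV (a × b)).map (fun (x : a × b → ℝ) (i : a) (j : b) => x (i, j)) = gM a b := by
    intro a b _ _
    have := Measure.infinitePi_map_curry (fun (_ : a) (_ : b) => gaussianReal 0 1)
    simp only [Measure.infinitePi_eq_pi] at this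
    exact this
  have h2 : (gV (m × n)).map (fun x (p : n × m) => x p.swap) = gV (n × m) := by
    have := (measurePreserving_piCongrLeft (fun _ : n × m => gaussianReal 0 1) (Equiv.prodComm m n)).map_eq
    unfold gV
    convert this using 2
    ext x p
    rw [MeasurableEquiv.coe_piCongrLeft]
    exact (Equiv.piCongrLeft_apply_apply (fun _ => ℝ) (Equiv.prodComm m n) x p.swap).symm
  refine ⟨by fun_prop, ?_⟩
  rw [← h1 m n, ← h1 n m, ← h2, Measure.map_map (by fun_prop) (by fun_prop),
    Measure.map_map (by fun_prop) (by fun_prop)]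
  rfl

/-- iid Gaussian columns -/
def gP (κ : ℕ) : Measure (ℕ → Fin κ → ℝ) := Measure.infinitePi (fun _ : ℕ => gV (Fin κ))

instance gP_prob (κ : ℕ) : IsProbabilityMeasure (gP κ) := by unfold gP; infer_instance

lemma mp_cols (κ : ℕ) {ι : Type} [Fintype ι] (c : ι → ℕ) (hc : Function.Injective c) :
    MeasurePreserving (fun (ω : ℕ → Fin κ → ℝ) (i : Fin κ) (j : ι) => ω (c j) i) (gP κ)
      (gM (Fin κ) ι) := by
  refine (mp_swap ι (Fin κ)).comp (g := fun (W : ι → Fin κ → ℝ) (j : Fin κ) (i : ι) => W i j)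
    (f := fun (ω : ℕ → Fin κ → ℝ) (j : ι) => ω (c j)) ?_
  refine ⟨by fun_prop, ?_⟩
  have h : iIndepFun (fun (n : ℕ) (ω : ℕ → Fin κ → ℝ) => ω n) (gP κ) :=
    iIndepFun_infinitePi (P := fun _ : ℕ => gV (Fin κ)) (X := fun _ x => x) (by fun_prop)
  have h2 := h.precomp hc
  rw [iIndepFun_iff_map_fun_eq_pi_map (fun i => Measurable.aemeasurable (by fun_prop))] at h2
  rw [h2]
  unfold gM gP
  congr 1
  ext1 i
  exact Measure.infinitePi_map_eval _ (c i)

lemma gamma_pos_ae (k : ℕ) : ∀ᵐ x ∂(gammaMeasure ((1 + (k:ℝ)) / 2) 1), 0 < x := by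
  have hne : ∀ᵐ x ∂(gammaMeasure ((1 + (k:ℝ)) / 2) 1), x ≠ 0 :=
    (withDensity_absolutelyContinuous _ _).ae_le (compl_mem_ae_iff.mpr (measure_singleton 0))
  have hnn : ∀ᵐ x ∂(gammaMeasure ((1 + (k:ℝ)) / 2) 1), 0 ≤ x := by
    have hs : {x : ℝ | ¬ 0 ≤ x} = Set.Iio 0 := by ext; simp
    rw [ae_iff, hs, gammaMeasure, withDensity_apply _ measurableSet_Iio]
    exact lintegral_gammaPDF_of_nonpos le_rfl
  filter_upwards [hne, hnn] with x h1 h2 using lt_of_le_of_ne h2 h1.symm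

lemma gamma_pi_pos_ae (k : ℕ) :
    ∀ᵐ t ∂(Measure.pi fun j : Fin k => gammaMeasure ((1 + (j:ℝ)) / 2) 1), ∀ j, 0 < t j := by
  rw [ae_all_iff]
  intro j
  exact (measurePreserving_eval (fun j : Fin k => gammaMeasure ((1 + (j:ℝ)) / 2) 1) j).quasiMeasurePreserving.ae
    (gamma_pos_ae j)

lemma det_ne_zero_ae (k : ℕ) : ∀ᵐ X ∂(gM (Fin k) (Fin k)), (Matrix.of X).det ≠ 0 := by
  have md := measurable_det_of (n := Fin k)
  have h1 : ∀ᵐ y ∂((Measure.pi fun j : Fin k => gammaMeasure ((1 + (j:ℝ)) / 2) 1).map (fun t => ∏ j, t j)), y ≠ 0 := by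
    rw [ae_map_iff (p := fun y => y ≠ 0) (Measurable.aemeasurable (by fun_prop)) (measurableSet_singleton (0:ℝ)).compl]
    filter_upwards [gamma_pi_pos_ae k] with t ht
    exact (Finset.prod_pos fun j _ => ht j).ne'
  rw [← map_det_sq] at h1
  have := ae_of_ae_map (Measurable.aemeasurable (by fun_prop)) h1
  filter_upwards [this] with X hX h0
  apply hX
  simp [h0]

/-- last `κ` columns -/
def lastc {M κ : ℕ} (W : Fin κ → Fin (M + κ) → ℝ) : Fin κ → Fin κ → ℝ :=
  fun i j => W i (Fin.natAdd M j)

/-- last block -/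
def lastb {M κ : ℕ} (U : Fin (M + κ) → Fin (M + κ) → ℝ) : Fin κ → Fin κ → ℝ :=
  fun i j => U (Fin.natAdd M i) (Fin.natAdd M j)

/-- the ratio statistic -/
def ratioF {M κ : ℕ} (W : Fin κ → Fin (M + κ) → ℝ) : ℝ :=
  (Matrix.of (lastc W)).det ^ 2 / (Matrix.of W * (Matrix.of W)ᵀ).det

lemma ratio_rot {M κ : ℕ} (W : Fin κ → Fin (M + κ) → ℝ)
    (hW : (Matrix.of W * (Matrix.of W)ᵀ).det ≠ 0) :
    ∃ V : Matrix.orthogonalGroup (Fin (M + κ)) ℝ, ∀ U : Matrix.orthogonalGroup (Fin (M + κ)) ℝ,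
      ratioF (M := M) (fun i => W i ᵥ* U.1)
        = (Matrix.of (lastb (M := M) (κ := κ) (V * U).1)).det ^ 2 := by
  obtain ⟨V, hV, h⟩ := exists_orth_tri'
    (Matrix.of (Fin.addCases (fun _ => 0) W : Fin (M + κ) → Fin (M + κ) → ℝ))
  have hV1 : V * Vᵀ = 1 := (Matrix.mem_orthogonalGroup_iff _ ℝ).mp hV
  have hz : ∀ i (j : Fin M), (W i ᵥ* V) (Fin.castAdd κ j) = 0 := by
    intro i j
    have := h (Fin.natAdd M i) (Fin.castAdd κ j) (by simp [Fin.lt_def]; omega)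
    simpa [Matrix.mul_apply, Matrix.vecMul, dotProduct] using this
  set L : Matrix (Fin κ) (Fin κ) ℝ := Matrix.of fun i j => (W i ᵥ* V) (Fin.natAdd M j) with hL
  refine ⟨⟨V, hV⟩⁻¹, fun U => ?_⟩
  have hU1 : U.1 * U.1ᵀ = 1 := (Matrix.mem_orthogonalGroup_iff _ ℝ).mp U.2
  have hWU : (Matrix.of fun i => W i ᵥ* U.1) = Matrix.of W * U.1 := by
    ext i j; simp [Matrix.mul_apply, Matrix.vecMul, dotProduct]
  have hWV : (Matrix.of fun i => W i ᵥ* V) = Matrix.of W * V := by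
    ext i j; simp [Matrix.mul_apply, Matrix.vecMul, dotProduct]
  have hden : (Matrix.of fun i => W i ᵥ* U.1) * (Matrix.of fun i => W i ᵥ* U.1)ᵀ
      = Matrix.of W * (Matrix.of W)ᵀ := by
    rw [hWU, Matrix.transpose_mul, Matrix.mul_assoc, ← Matrix.mul_assoc _ _ (Matrix.of W)ᵀ, hU1, Matrix.one_mul]
  have hLL : Matrix.of W * (Matrix.of W)ᵀ = L * Lᵀ := by
    have : Matrix.of W * (Matrix.of W)ᵀ = (Matrix.of fun i => W i ᵥ* V) * (Matrix.of fun i => W i ᵥ* V)ᵀ := by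
      rw [hWV, Matrix.transpose_mul, Matrix.mul_assoc, ← Matrix.mul_assoc V _ (Matrix.of W)ᵀ, hV1, Matrix.one_mul]
    rw [this]
    ext i j
    simp [Matrix.mul_apply, Fin.sum_univ_add, hz, hL]
  have hnum : Matrix.of (lastc (M := M) (fun i => W i ᵥ* U.1))
      = L * Matrix.of (lastb (M := M) (κ := κ) (⟨V, hV⟩⁻¹ * U : Matrix.orthogonalGroup (Fin (M + κ)) ℝ).1) := by
    have e : (Matrix.of fun i => W i ᵥ* U.1) = (Matrix.of fun i => W i ᵥ* V) * (Vᵀ * U.1) := by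
      rw [hWU, hWV, Matrix.mul_assoc, ← Matrix.mul_assoc V, hV1, Matrix.one_mul]
    ext i j
    have := congrFun (congrFun e i) (Fin.natAdd M j)
    rw [Matrix.mul_apply, Fin.sum_univ_add] at this
    simp only [Matrix.of_apply, hz, zero_mul, Finset.sum_const_zero, zero_add] at this
    simp only [Matrix.of_apply, lastc, this, Matrix.mul_apply, hL, lastb]
    rfl
  have hLd : L.det ≠ 0 := by
    intro h0; apply hW; rw [hLL, Matrix.det_mul, h0, zero_mul]
  rw [ratioF, hden, hnum, hLL, Matrix.det_mul, Matrix.det_mul, Matrix.det_transpose]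
  field_simp

lemma gramdet_ne_zero {M κ : ℕ} (W : Fin κ → Fin (M + κ) → ℝ)
    (h : (Matrix.of (lastc W)).det ≠ 0) : (Matrix.of W * (Matrix.of W)ᵀ).det ≠ 0 := by
  intro h0
  obtain ⟨v, hv, hv0⟩ := Matrix.exists_vecMul_eq_zero_iff.mpr h0
  have h1 : (v ᵥ* Matrix.of W) ⬝ᵥ (v ᵥ* Matrix.of W) = 0 := by
    have := congrArg (fun x => x ⬝ᵥ v) hv0
    simp only [zero_dotProduct] at this
    rw [← this, ← Matrix.vecMul_vecMul, ← Matrix.dotProduct_mulVec (v ᵥ* Matrix.of W) (Matrix.of W)ᵀ v, Matrix.mulVec_transpose]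
  have h2 := dotProduct_self_eq_zero.mp h1
  apply h
  apply Matrix.exists_vecMul_eq_zero_iff.mp
  refine ⟨v, hv, ?_⟩
  ext j
  have := congrFun h2 (Fin.natAdd M j)
  simpa [Matrix.vecMul, dotProduct, lastc] using this

instance borel_orth (N : ℕ) : BorelSpace (Matrix.orthogonalGroup (Fin N) ℝ) := ⟨rfl⟩

lemma measurable_entry {N : ℕ} (i j : Fin N) :
    Measurable (fun U : Matrix.orthogonalGroup (Fin N) ℝ => U.1 i j) := by
  apply Continuous.measurable
  exact (continuous_subtype_val : Continuous fun U : Matrix.orthogonalGroup (Fin N) ℝ => U.1).matrix_elem i j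

lemma measurable_ratioF {M κ : ℕ} : Measurable (ratioF (M := M) (κ := κ)) := by
  unfold ratioF
  apply Measurable.div
  · apply Measurable.pow_const
    apply measurable_det_of.comp
    unfold lastc
    fun_prop
  · have : Measurable fun W : Fin κ → Fin (M+κ) → ℝ => fun i j : Fin κ => ∑ k, W i k * W j k := by fun_prop
    exact measurable_det_of.comp this

lemma measurable_lastb {M κ : ℕ} : Measurable (fun U : Matrix.orthogonalGroup (Fin (M + κ)) ℝ =>
    (Matrix.of (lastb (M := M) (κ := κ) U.1)).det) := by
  apply measurable_det_of.comp (g := fun Y : Fin κ → Fin κ → ℝ => (Matrix.of Y).det)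
    (f := fun U : Matrix.orthogonalGroup (Fin (M + κ)) ℝ => lastb (M := M) (κ := κ) U.1)
  refine measurable_pi_lambda _ fun i => measurable_pi_lambda _ fun j => ?_
  exact measurable_entry _ _

/-- column arrangement -/
def colc (M κ : ℕ) : Fin (M + κ) → ℕ := Fin.addCases (fun m => κ + m) (fun k => (k : ℕ))

lemma colc_inj (M κ : ℕ) : Function.Injective (colc M κ) := by
  intro a b
  refine Fin.addCases (fun a => ?_) (fun a => ?_) a <;> refine Fin.addCases (fun b => ?_) (fun b => ?_) b
  all_goals simp [colc, Fin.ext_iff]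
  all_goals omega

/-- matrix of the first columns -/
def Wmat (M κ : ℕ) (ω : ℕ → Fin κ → ℝ) : Fin κ → Fin (M + κ) → ℝ := fun i j => ω (colc M κ j) i

lemma lastc_Wmat (M κ : ℕ) (ω : ℕ → Fin κ → ℝ) :
    lastc (Wmat M κ ω) = fun i (j : Fin κ) => ω j i := by
  ext i j; simp [lastc, Wmat, colc]

lemma mp_Wmat (M κ : ℕ) : MeasurePreserving (Wmat M κ) (gP κ) (gM (Fin κ) (Fin (M + κ))) :=
  mp_cols κ (colc M κ) (colc_inj M κ)

lemma mp_X (κ : ℕ) : MeasurePreserving (fun (ω : ℕ → Fin κ → ℝ) i (j : Fin κ) => ω j i) (gP κ)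
    (gM (Fin κ) (Fin κ)) := mp_cols κ (fun j : Fin κ => (j : ℕ)) Fin.val_injective

lemma ae_X (κ : ℕ) : ∀ᵐ ω ∂(gP κ), (Matrix.of fun i (j : Fin κ) => ω j i).det ≠ 0 :=
  (mp_X κ).quasiMeasurePreserving.ae (det_ne_zero_ae κ)

lemma ae_gram (M κ : ℕ) : ∀ᵐ W ∂(gM (Fin κ) (Fin (M + κ))), (Matrix.of W * (Matrix.of W)ᵀ).det ≠ 0 := by
  have hm : Measurable fun W : Fin κ → Fin (M+κ) → ℝ => (Matrix.of W * (Matrix.of W)ᵀ).det := by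
    have : Measurable fun W : Fin κ → Fin (M+κ) → ℝ => fun i j : Fin κ => ∑ k, W i k * W j k := by fun_prop
    exact measurable_det_of.comp this
  rw [← (mp_Wmat M κ).map_eq, ae_map_iff (p := fun W => (Matrix.of W * (Matrix.of W)ᵀ).det ≠ 0) (mp_Wmat M κ).measurable.aemeasurable
    (hm (measurableSet_singleton (0:ℝ)).compl)]
  filter_upwards [ae_X κ] with ω hω
  apply gramdet_ne_zero
  rwa [lastc_Wmat]

lemma law_ratio (M κ : ℕ) (μ : Measure (Matrix.orthogonalGroup (Fin (M + κ)) ℝ))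
    [μ.IsHaarMeasure] [IsProbabilityMeasure μ] :
    μ.map (fun U => (Matrix.of (lastb (M := M) (κ := κ) U.1)).det ^ 2)
      = (gM (Fin κ) (Fin (M + κ))).map ratioF := by
  have mb := measurable_lastb (M := M) (κ := κ)
  refine Measure.ext_of_lintegral _ fun g hg => ?_
  rw [lintegral_map hg (by fun_prop), lintegral_map hg measurable_ratioF]
  calc ∫⁻ U, g ((Matrix.of (lastb (M := M) (κ := κ) U.1)).det ^ 2) ∂μ
      = ∫⁻ _W, ∫⁻ U, g ((Matrix.of (lastb (M := M) (κ := κ) U.1)).det ^ 2) ∂μ ∂(gM (Fin κ) (Fin (M + κ))) := by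
        simp
    _ = ∫⁻ W, ∫⁻ U, g (ratioF (M := M) (fun i => W i ᵥ* U.1)) ∂μ ∂(gM (Fin κ) (Fin (M + κ))) := by
        apply lintegral_congr_ae
        filter_upwards [ae_gram M κ] with W hW
        obtain ⟨V, hV⟩ := ratio_rot W hW
        simp_rw [hV]
        exact (lintegral_mul_left_eq_self (μ := μ)
          (fun U => g ((Matrix.of (lastb (M := M) (κ := κ) U.1)).det ^ 2)) V).symm
    _ = ∫⁻ U, ∫⁻ W, g (ratioF (M := M) (fun i => W i ᵥ* U.1)) ∂(gM (Fin κ) (Fin (M + κ))) ∂μ := by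
        apply lintegral_lintegral_swap
        apply Measurable.aemeasurable
        apply hg.comp
        apply measurable_ratioF.comp
        refine measurable_pi_lambda _ fun i => measurable_pi_lambda _ fun j => ?_
        simp only [Matrix.vecMul, dotProduct]
        refine Finset.measurable_sum _ fun k _ => ?_
        have h2 : Measurable fun c : (Fin κ → Fin (M+κ) → ℝ) × Matrix.orthogonalGroup (Fin (M+κ)) ℝ =>
          c.2.1 k j := (measurable_entry k j).comp measurable_snd
        have h1 : Measurable fun c : (Fin κ → Fin (M+κ) → ℝ) × Matrix.orthogonalGroup (Fin (M+κ)) ℝ =>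
          c.1 i k := by fun_prop
        exact h1.mul h2
    _ = ∫⁻ _U, ∫⁻ W, g (ratioF W) ∂(gM (Fin κ) (Fin (M + κ))) ∂μ := by
        apply lintegral_congr
        intro U
        exact (rotM U.1 U.2).lintegral_comp (hg.comp measurable_ratioF)
    _ = _ := by simp

lemma abs_det_trunc (M κ : ℕ) (U : Matrix.orthogonalGroup (Fin (M + κ)) ℝ) :
    |(truncO (M + κ) M (Nat.le_add_right M κ) U).det| = |(Matrix.of (lastb (M := M) (κ := κ) U.1)).det| := by
  have h : U.1 * U.1ᵀ = 1 := (Matrix.mem_orthogonalGroup_iff _ ℝ).mp U.2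
  have := abs_det_blocks (U.1.submatrix finSumFinEquiv finSumFinEquiv : Matrix (Fin M ⊕ Fin κ) (Fin M ⊕ Fin κ) ℝ) (by
    rw [Matrix.transpose_submatrix, Matrix.submatrix_mul_equiv, h, Matrix.submatrix_one_equiv])
  have e1 : truncO (M + κ) M (Nat.le_add_right M κ) U = (U.1.submatrix finSumFinEquiv finSumFinEquiv : Matrix (Fin M ⊕ Fin κ) (Fin M ⊕ Fin κ) ℝ).toBlocks₁₁ := by
    ext i j; rfl
  have e2 : Matrix.of (lastb (M := M) (κ := κ) U.1) = (U.1.submatrix finSumFinEquiv finSumFinEquiv : Matrix (Fin M ⊕ Fin κ) (Fin M ⊕ Fin κ) ℝ).toBlocks₂₂ := by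
    ext i j; rfl
  rw [e1, e2, this]

lemma gV_moment (κ : ℕ) (i i' : Fin κ) :
    Integrable (fun x : Fin κ → ℝ => x i * x i') (gV (Fin κ)) ∧
    ∫ x, x i * x i' ∂(gV (Fin κ)) = (1 : Matrix (Fin κ) (Fin κ) ℝ) i i' := by
  have hmp : ∀ i, MeasurePreserving (fun x : Fin κ → ℝ => x i) (gV (Fin κ)) (gaussianReal 0 1) :=
    fun i => measurePreserving_eval (fun _ : Fin κ => gaussianReal 0 1) i
  have hL : ∀ i, MemLp (fun x : Fin κ → ℝ => x i) 2 (gV (Fin κ)) := fun i =>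
    (memLp_id_gaussianReal (μ := 0) (v := 1) 2).comp_measurePreserving (hmp i)
  refine ⟨(hL i).integrable_mul (hL i'), ?_⟩
  by_cases h : i = i'
  · subst h
    have h3 := integral_map (μ := gV (Fin κ)) (φ := fun x => x i) (f := fun y : ℝ => y * y)
      (hmp i).measurable.aemeasurable (by fun_prop)
    rw [Matrix.one_apply_eq, ← h3, (hmp i).map_eq]
    have := variance_id_gaussianReal (μ := 0) (v := 1)
    rw [variance_eq_integral (by fun_prop)] at this
    simpa [sq] using this
  · rw [Matrix.one_apply_ne h]
    have hi : iIndepFun (fun (i : Fin κ) (x : Fin κ → ℝ) => x i) (gV (Fin κ)) :=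
      iIndepFun_pi (X := fun _ x => x) (fun _ => aemeasurable_id)
    have := (hi.indepFun h).integral_fun_mul_eq_mul_integral (hL i).aestronglyMeasurable (hL i').aestronglyMeasurable
    rw [this]
    have h0 : ∫ x, x i ∂(gV (Fin κ)) = 0 := by
      have := integral_map (μ := gV (Fin κ)) (φ := fun x => x i) (f := fun y : ℝ => y) (hmp i).measurable.aemeasurable (by fun_prop)
      rw [← this, (hmp i).map_eq]
      simp
    rw [h0, zero_mul]

lemma slln (κ : ℕ) : ∀ᵐ ω : ℕ → Fin κ → ℝ ∂(gP κ), ∀ i i' : Fin κ,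
    Tendsto (fun n : ℕ => (∑ m ∈ Finset.range n, ω m i * ω m i') / (n : ℝ)) atTop
      (nhds ((1 : Matrix (Fin κ) (Fin κ) ℝ) i i')) := by
  rw [ae_all_iff]; intro i
  rw [ae_all_iff]; intro i'
  have hmp : ∀ n, MeasurePreserving (fun ω : ℕ → Fin κ → ℝ => ω n) (gP κ) (gV (Fin κ)) :=
    fun n => ⟨by fun_prop, Measure.infinitePi_map_eval _ n⟩
  have hF : Measurable fun x : Fin κ → ℝ => x i * x i' := by fun_prop
  have h := strong_law_ae_real (μ := gP κ) (fun n ω => ω n i * ω n i') ?_ ?_ ?_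
  · have e : ∫ ω, ω 0 i * ω 0 i' ∂(gP κ) = (1 : Matrix (Fin κ) (Fin κ) ℝ) i i' := by
      rw [← (gV_moment κ i i').2, ← (hmp 0).map_eq, integral_map (hmp 0).measurable.aemeasurable hF.aestronglyMeasurable]
    rw [e] at h
    exact h
  · exact (hmp 0).integrable_comp_of_integrable (gV_moment κ i i').1
  · intro n m hnm
    have h : iIndepFun (fun (n : ℕ) (ω : ℕ → Fin κ → ℝ) => ω n) (gP κ) :=
      iIndepFun_infinitePi (P := fun _ : ℕ => gV (Fin κ)) (X := fun _ x => x) (by fun_prop)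
    exact (h.indepFun hnm).comp hF hF
  · intro n
    refine IdentDistrib.comp (u := fun x : Fin κ → ℝ => x i * x i') (f := fun ω : ℕ → Fin κ → ℝ => ω n) (g := fun ω : ℕ → Fin κ → ℝ => ω 0) ⟨(hmp n).measurable.aemeasurable, (hmp 0).measurable.aemeasurable, ?_⟩ hF
    rw [(hmp n).map_eq, (hmp 0).map_eq]

lemma gram_sum (M κ : ℕ) (ω : ℕ → Fin κ → ℝ) (i i' : Fin κ) :
    (Matrix.of (Wmat M κ ω) * (Matrix.of (Wmat M κ ω))ᵀ) i i'
      = ∑ m ∈ Finset.range (κ + M), ω m i * ω m i' := by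
  rw [Matrix.mul_apply, Fin.sum_univ_add, Finset.sum_range_add, Finset.sum_range, Finset.sum_range,
    add_comm]
  simp [Wmat, colc]

lemma gram_tendsto (κ : ℕ) (ω : ℕ → Fin κ → ℝ)
    (h : ∀ i i' : Fin κ, Tendsto (fun n : ℕ => (∑ m ∈ Finset.range n, ω m i * ω m i') / (n : ℝ)) atTop
      (nhds ((1 : Matrix (Fin κ) (Fin κ) ℝ) i i'))) :
    Tendsto (fun M : ℕ => (Matrix.of (Wmat M κ ω) * (Matrix.of (Wmat M κ ω))ᵀ).det / ((M : ℝ) + κ) ^ κ)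
      atTop (nhds 1) := by
  have h1 : Tendsto (fun M : ℕ => (((M : ℝ) + κ)⁻¹ • (Matrix.of (Wmat M κ ω) * (Matrix.of (Wmat M κ ω))ᵀ)))
      atTop (nhds (1 : Matrix (Fin κ) (Fin κ) ℝ)) := by
    refine tendsto_pi_nhds.mpr fun i => tendsto_pi_nhds.mpr fun i' => ?_
    have := (h i i').comp (tendsto_add_atTop_nat κ)
    refine this.congr fun M => ?_
    rw [Matrix.smul_apply, gram_sum]
    simp only [Function.comp, smul_eq_mul, Nat.cast_add]
    rw [add_comm κ M, div_eq_inv_mul]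
  have h2 := ((Continuous.matrix_det continuous_id).tendsto (1 : Matrix (Fin κ) (Fin κ) ℝ)).comp h1
  simp only [id, Matrix.det_one] at h2
  refine h2.congr fun M => ?_
  simp only [Function.comp, Matrix.det_smul, Fintype.card_fin, inv_pow, div_eq_inv_mul]

lemma log_tendsto (κ : ℕ) (ω : ℕ → Fin κ → ℝ)
    (hX : (Matrix.of fun i (j : Fin κ) => ω j i).det ≠ 0)
    (h : ∀ i i' : Fin κ, Tendsto (fun n : ℕ => (∑ m ∈ Finset.range n, ω m i * ω m i') / (n : ℝ)) atTop
      (nhds ((1 : Matrix (Fin κ) (Fin κ) ℝ) i i'))) :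
    Tendsto (fun M : ℕ => (1 / 2) * Real.log (ratioF (Wmat M κ ω)) + ((κ : ℝ) / 2) * Real.log ((M : ℝ) / 2))
      atTop (nhds ((1 / 2) * Real.log ((Matrix.of fun i (j : Fin κ) => ω j i).det ^ 2 / 2 ^ κ))) := by
  set X := (Matrix.of fun i (j : Fin κ) => ω j i).det with hXd
  have h1 := gram_tendsto κ ω h
  have h2 : Tendsto (fun M : ℕ => (M : ℝ) / ((M : ℝ) + κ)) atTop (nhds 1) :=
    tendsto_natCast_div_add_atTop (κ : ℝ)
  have h3 := ((h2.pow κ).div h1 one_ne_zero).const_mul (X ^ 2 / 2 ^ κ)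
  have hne : X ^ 2 / 2 ^ κ ≠ 0 := by positivity
  simp only [one_pow, div_one, mul_one] at h3
  refine ((h3.log hne).const_mul (1 / 2)).congr' ?_
  filter_upwards [eventually_ge_atTop 1] with M hM
  have hM' : (0 : ℝ) < M := by exact_mod_cast hM
  have hg : (Matrix.of (Wmat M κ ω) * (Matrix.of (Wmat M κ ω))ᵀ).det ≠ 0 := by
    apply gramdet_ne_zero
    rwa [lastc_Wmat]
  have hr : ratioF (Wmat M κ ω) = X ^ 2 / (Matrix.of (Wmat M κ ω) * (Matrix.of (Wmat M κ ω))ᵀ).det := by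
    unfold ratioF
    rw [lastc_Wmat]
  have hr0 : ratioF (Wmat M κ ω) ≠ 0 := by
    rw [hr]
    exact div_ne_zero (pow_ne_zero _ hX) hg
  have e : X ^ 2 / 2 ^ κ * (((M : ℝ) / ((M : ℝ) + κ)) ^ κ /
      ((Matrix.of (Wmat M κ ω) * (Matrix.of (Wmat M κ ω))ᵀ).det / ((M : ℝ) + κ) ^ κ))
      = ratioF (Wmat M κ ω) * ((M : ℝ) / 2) ^ κ := by
    rw [hr]
    have : (M : ℝ) + κ ≠ 0 := by positivity
    rw [div_pow, div_pow]
    field_simp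
  simp only [Pi.div_apply, Pi.pow_apply]
  rw [e, Real.log_mul hr0 (by positivity), Real.log_pow]
  ring

theorem limit_law_log_det_weak_non_unitarity_orthogonal
    (κ : ℕ) (hκ : 1 ≤ κ)
    (μ : ∀ M : ℕ, Measure (Matrix.orthogonalGroup (Fin (M + κ)) ℝ))
    (hHaar : ∀ M, (μ M).IsHaarMeasure) (hProb : ∀ M, IsProbabilityMeasure (μ M)) :
    ∀ f : BoundedContinuousFunction ℝ ℝ,
      Tendsto (fun M : ℕ =>
        ∫ y, f y ∂(Measure.map (fun U =>
          Real.log (|Matrix.det (truncO (M + κ) M (Nat.le_add_right M κ) U)|)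
            + ((κ : ℝ) / 2) * Real.log ((M : ℝ) / 2)) (μ M)))
        atTop
        (nhds (∫ y, f y ∂(Measure.map
          (fun t : Fin κ → ℝ => (1 / 2) * ∑ j, Real.log (t j))
          (Measure.pi (fun j : Fin κ => gammaMeasure ((1 + j) / 2) 1))))) := by
  intro f
  have md := measurable_det_of (n := Fin κ)
  have hlim : ∫ y, f y ∂(Measure.map
          (fun t : Fin κ → ℝ => (1 / 2) * ∑ j, Real.log (t j))
          (Measure.pi (fun j : Fin κ => gammaMeasure ((1 + j) / 2) 1)))
      = ∫ ω, f ((1 / 2) * Real.log ((Matrix.of fun i (j : Fin κ) => ω j i).det ^ 2 / 2 ^ κ)) ∂(gP κ) := by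
    have hphi : Measurable fun y : ℝ => f ((1 / 2) * Real.log y) :=
      f.continuous.measurable.comp (Real.measurable_log.const_mul _)
    have mX : Measurable fun X : Fin κ → Fin κ → ℝ => (Matrix.of X).det ^ 2 / 2 ^ κ := by fun_prop
    have a1 : ∫ X, f ((1 / 2) * Real.log ((Matrix.of X).det ^ 2 / 2 ^ κ)) ∂(gM (Fin κ) (Fin κ))
        = ∫ ω, f ((1 / 2) * Real.log ((Matrix.of fun i (j : Fin κ) => ω j i).det ^ 2 / 2 ^ κ)) ∂(gP κ) := by
      rw [← (mp_X κ).map_eq]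
      exact integral_map (mp_X κ).measurable.aemeasurable (hphi.comp mX).aestronglyMeasurable
    rw [← a1, ← integral_map (f := fun y : ℝ => f ((1 / 2) * Real.log y)) mX.aemeasurable
      hphi.aestronglyMeasurable, map_det_sq,
      integral_map (Measurable.aemeasurable (by fun_prop)) hphi.aestronglyMeasurable,
      integral_map (Measurable.aemeasurable (by fun_prop)) f.continuous.aestronglyMeasurable]
    apply integral_congr_ae
    filter_upwards [gamma_pi_pos_ae κ] with t ht
    rw [Real.log_prod (fun j _ => (ht j).ne')]
  have hM : ∀ M : ℕ, ∫ y, f y ∂(Measure.map (fun U =>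
          Real.log (|Matrix.det (truncO (M + κ) M (Nat.le_add_right M κ) U)|)
            + ((κ : ℝ) / 2) * Real.log ((M : ℝ) / 2)) (μ M))
      = ∫ ω, f ((1 / 2) * Real.log (ratioF (Wmat M κ ω)) + ((κ : ℝ) / 2) * Real.log ((M : ℝ) / 2)) ∂(gP κ) := by
    intro M
    have i1 := hHaar M
    have i2 := hProb M
    have mb := measurable_lastb (M := M) (κ := κ)
    have hphi : Measurable fun y : ℝ =>
        f ((1 / 2) * Real.log y + ((κ : ℝ) / 2) * Real.log ((M : ℝ) / 2)) :=
      f.continuous.measurable.comp ((Real.measurable_log.const_mul _).add_const _)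
    have e : (fun U : Matrix.orthogonalGroup (Fin (M + κ)) ℝ =>
          Real.log (|Matrix.det (truncO (M + κ) M (Nat.le_add_right M κ) U)|)
            + ((κ : ℝ) / 2) * Real.log ((M : ℝ) / 2))
        = fun U => (1 / 2) * Real.log ((Matrix.of (lastb (M := M) (κ := κ) U.1)).det ^ 2)
            + ((κ : ℝ) / 2) * Real.log ((M : ℝ) / 2) := by
      ext U
      rw [abs_det_trunc, Real.log_abs, Real.log_pow]
      push_cast
      ring
    have mb2 : Measurable fun U : Matrix.orthogonalGroup (Fin (M + κ)) ℝ =>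
        (Matrix.of (lastb (M := M) (κ := κ) U.1)).det ^ 2 := mb.pow_const 2
    rw [e, integral_map ((mb2.log.const_mul _).add_const _).aemeasurable
      f.continuous.aestronglyMeasurable,
      ← integral_map (f := fun y : ℝ =>
        f ((1 / 2) * Real.log y + ((κ : ℝ) / 2) * Real.log ((M : ℝ) / 2))) mb2.aemeasurable
        hphi.aestronglyMeasurable, law_ratio, ← (mp_Wmat M κ).map_eq,
      Measure.map_map measurable_ratioF (mp_Wmat M κ).measurable,
      integral_map (measurable_ratioF.comp (mp_Wmat M κ).measurable).aemeasurable
        hphi.aestronglyMeasurable]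
    rfl
  rw [hlim]
  simp_rw [hM]
  refine tendsto_integral_of_dominated_convergence (fun _ => ‖f‖) ?_ (integrable_const _) ?_ ?_
  · intro M
    refine Measurable.aestronglyMeasurable ?_
    exact f.continuous.measurable.comp
      (((measurable_ratioF.comp (mp_Wmat M κ).measurable).log.const_mul _).add_const _)
  · intro M
    exact Eventually.of_forall fun ω => f.norm_coe_le_norm _
  · filter_upwards [ae_X κ, slln κ] with ω h1 h2
    exact (f.continuous.tendsto _).comp (log_tendsto κ ω h1 h2)
end
end

section
/- Let 1 ≤ M < N. Then the law of the complex random variable det(I_M − A) under the Haar probability measure on U(N) equals the law of the product ∏_{l=1}^{M} ( 1 − e^{iω_l} √(b_l) ), where ω_1, …, ω_M, b_1, …, b_M are all independent, each ω_l is uniformly distributed on [0, 2π), and each b_l is Beta-distributed with parameters (1, N−l); equivalently, the pushforward of Haar under U ↦ det(I_M − A(U)) equals the pushforward of the product measure (⊗_{l=1}^M Uniform[0,2π)) ⊗ (⊗_{l=1}^M Beta(1, N−l)) under the map ((ω_l)_l, (b_l)_l) ↦ ∏_{l=1}^M (1 − e^{iω_l}√(b_l)) ∈ ℂ. -/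
open MeasureTheory Matrix

noncomputable section

/-- Borel measurable structure on the unitary group. -/
instance (N : ℕ) : MeasurableSpace (Matrix.unitaryGroup (Fin N) ℂ) := borel _

/-- The top-left `M × M` truncation of an `N × N` unitary matrix. -/
def trunc (N M : ℕ) (h : M ≤ N) (U : Matrix.unitaryGroup (Fin N) ℂ) :
    Matrix (Fin M) (Fin M) ℂ :=
  Matrix.submatrix (U : Matrix (Fin N) (Fin N) ℂ) (Fin.castLE h) (Fin.castLE h)

/-- The Beta probability measure on `(0,1)` with parameters `a`, `b`. -/
def betaMeasure (a b : ℝ) : Measure ℝ :=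
  MeasureTheory.volume.withDensity fun x =>
    ENNReal.ofReal ((Set.Ioo (0 : ℝ) 1).indicator
      (fun x => x ^ (a - 1) * (1 - x) ^ (b - 1)
        * (Real.Gamma (a + b) / (Real.Gamma a * Real.Gamma b))) x)

/-- The uniform probability measure on `[0, 2π)`. -/
def uniformCircle : Measure ℝ :=
  (ENNReal.ofReal (2 * Real.pi))⁻¹ •
    MeasureTheory.volume.restrict (Set.Ico (0 : ℝ) (2 * Real.pi))

/-! ### Algebra -/

section algebra

set_option linter.unusedSimpArgs false

/-- Entries of `1 ⊕ V`. -/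
def embMat {n : ℕ} (V : Matrix (Fin n) (Fin n) ℂ) : Matrix (Fin (n+1)) (Fin (n+1)) ℂ :=
  Matrix.of (Fin.cons (Fin.cons 1 (fun _ => 0)) (fun i => Fin.cons 0 (V i)))

@[simp] lemma embMat_zero_zero {n : ℕ} (V : Matrix (Fin n) (Fin n) ℂ) : embMat V 0 0 = 1 := rfl
@[simp] lemma embMat_zero_succ {n : ℕ} (V : Matrix (Fin n) (Fin n) ℂ) (j : Fin n) :
    embMat V 0 j.succ = 0 := rfl
@[simp] lemma embMat_succ_zero {n : ℕ} (V : Matrix (Fin n) (Fin n) ℂ) (j : Fin n) :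
    embMat V j.succ 0 = 0 := rfl
@[simp] lemma embMat_succ_succ {n : ℕ} (V : Matrix (Fin n) (Fin n) ℂ) (i j : Fin n) :
    embMat V i.succ j.succ = V i j := rfl

lemma embMat_mul {n : ℕ} (V W : Matrix (Fin n) (Fin n) ℂ) :
    embMat V * embMat W = embMat (V * W) := by
  ext i j
  refine Fin.cases ?_ (fun i => ?_) i <;> refine Fin.cases ?_ (fun j => ?_) j <;>
    simp [Matrix.mul_apply, Fin.sum_univ_succ]

lemma embMat_one {n : ℕ} : embMat (1 : Matrix (Fin n) (Fin n) ℂ) = 1 := by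
  ext i j
  refine Fin.cases ?_ (fun i => ?_) i <;> refine Fin.cases ?_ (fun j => ?_) j <;>
    simp [Matrix.one_apply, (Fin.succ_ne_zero _).symm]

lemma embMat_star {n : ℕ} (V : Matrix (Fin n) (Fin n) ℂ) :
    star (embMat V) = embMat (star V) := by
  ext i j
  refine Fin.cases ?_ (fun i => ?_) i <;> refine Fin.cases ?_ (fun j => ?_) j <;>
    simp [Matrix.star_apply]

lemma embMat_injective {n : ℕ} {V W : Matrix (Fin n) (Fin n) ℂ} (h : embMat V = embMat W) :
    V = W := by
  ext i j
  have := congrFun (congrFun h i.succ) j.succ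
  simpa using this

/-- `V ↦ 1 ⊕ V` as a map of unitary groups. -/
def emb {n : ℕ} (V : Matrix.unitaryGroup (Fin n) ℂ) : Matrix.unitaryGroup (Fin (n+1)) ℂ :=
  ⟨embMat (V : Matrix (Fin n) (Fin n) ℂ), by
    rw [Matrix.mem_unitaryGroup_iff, embMat_star, embMat_mul, Matrix.mem_unitaryGroup_iff.1 V.2,
      embMat_one]⟩

lemma coe_emb {n : ℕ} (V : Matrix.unitaryGroup (Fin n) ℂ) :
    ((emb V : Matrix.unitaryGroup (Fin (n+1)) ℂ) : Matrix (Fin (n+1)) (Fin (n+1)) ℂ)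
      = embMat (V : Matrix (Fin n) (Fin n) ℂ) := rfl

/-- The reflection. -/
def hrefl {n : ℕ} (u : Fin (n+1) → ℂ) : Matrix (Fin (n+1)) (Fin (n+1)) ℂ :=
  1 + (1 / star (u 0 - 1)) • Matrix.vecMulVec (u - Pi.single 0 1) (star (u - Pi.single 0 1))

lemma hrefl_apply {n : ℕ} (u : Fin (n+1) → ℂ) (i j : Fin (n+1)) :
    hrefl u i j = (1 : Matrix (Fin (n+1)) (Fin (n+1)) ℂ) i j +
      (1 / star (u 0 - 1)) * ((u - Pi.single 0 1 : Fin (n+1) → ℂ) i *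
        star ((u - Pi.single 0 1 : Fin (n+1) → ℂ) j)) := by
  simp only [hrefl, Matrix.add_apply, Matrix.smul_apply, Matrix.vecMulVec_apply, smul_eq_mul,
    Pi.star_apply]

lemma hrefl_col {n : ℕ} (u : Fin (n+1) → ℂ) (h0 : u 0 ≠ 1) (i : Fin (n+1)) :
    hrefl u i 0 = u i := by
  have h1 : star (u 0 - 1) ≠ 0 := by
    rw [Ne, star_eq_zero, sub_eq_zero]; exact h0
  rw [hrefl_apply]
  have : star ((u - Pi.single 0 1 : Fin (n+1) → ℂ) 0) = star (u 0 - 1) := by simp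
  rw [this]
  field_simp
  simp [Matrix.one_apply, Pi.single_apply]

lemma hrefl_mem {n : ℕ} (u : Fin (n+1) → ℂ) (hu : ∑ i, star (u i) * u i = 1) (h0 : u 0 ≠ 1) :
    hrefl u ∈ Matrix.unitaryGroup (Fin (n+1)) ℂ := by
  have h1 : star (u 0 - 1) ≠ 0 := by
    rw [Ne, star_eq_zero, sub_eq_zero]; exact h0
  have h2 : u 0 - 1 ≠ 0 := by rwa [Ne, sub_eq_zero]
  set x : Fin (n+1) → ℂ := u - Pi.single 0 1 with hx
  have hxx : star x ⬝ᵥ x = - (star (u 0 - 1)) - (u 0 - 1) := by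
    simp only [dotProduct, Fin.sum_univ_succ] at hu ⊢
    simp [hx] at hu ⊢
    linear_combination hu
  rw [Matrix.mem_unitaryGroup_iff]
  have hs : star (hrefl u) = 1 + (1 / (u 0 - 1)) • Matrix.vecMulVec x (star x) := by
    ext i j
    rw [Matrix.star_apply, hrefl_apply]
    simp only [Matrix.add_apply, Matrix.smul_apply, Matrix.vecMulVec_apply, ← hx]
    simp [Matrix.one_apply, eq_comm, mul_comm]
  rw [hs, hrefl, ← hx, Matrix.add_mul, Matrix.mul_add, Matrix.mul_add, Matrix.smul_mul,
    Matrix.smul_mul, Matrix.mul_smul, Matrix.mul_smul, Matrix.vecMulVec_mul_vecMulVec, hxx]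
  simp only [Matrix.mul_one, Matrix.one_mul]
  have : ((1 / star (u 0 - 1)) + 1 / (u 0 - 1) + (1 / star (u 0 - 1)) * (1 / (u 0 - 1)) *
    (- (star (u 0 - 1)) - (u 0 - 1))) = 0 := by
    field_simp; ring
  ext i j
  simp only [Matrix.add_apply, Matrix.smul_apply, Matrix.vecMulVec_apply, smul_eq_mul,
    Pi.smul_apply, MulOpposite.smul_eq_mul_unop, MulOpposite.unop_op]
  linear_combination (x i * star x j) * this

lemma col_unit {n : ℕ} (G : Matrix.unitaryGroup (Fin n) ℂ) (j : Fin n) :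
    ∑ i, star ((G : Matrix (Fin n) (Fin n) ℂ) i j) * (G : Matrix (Fin n) (Fin n) ℂ) i j = 1 := by
  have := congrFun (congrFun (Matrix.mem_unitaryGroup_iff'.1 G.2) j) j
  simpa [Matrix.mul_apply, Matrix.star_apply] using this

lemma eq_of_unit_of_zero {n : ℕ} (u : Fin (n+1) → ℂ) (hu : ∑ i, star (u i) * u i = 1)
    (h0 : u 0 = 1) (i : Fin (n+1)) : u i = (1 : Matrix (Fin (n+1)) (Fin (n+1)) ℂ) i 0 := by
  refine Fin.cases ?_ (fun i => ?_) i
  · simp [h0]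
  · rw [Fin.sum_univ_succ, h0] at hu
    have h2 : ∑ i : Fin n, ‖u i.succ‖^2 = 0 := by
      have : ∑ i : Fin n, star (u i.succ) * u i.succ = 0 := by
        simpa using hu
      have h3 : ((∑ i : Fin n, ‖u i.succ‖^2 : ℝ) : ℂ) = 0 := by
        rw [← this]; push_cast
        refine Finset.sum_congr rfl fun i _ => ?_
        exact (Complex.conj_mul' _).symm
      exact_mod_cast h3
    rw [Finset.sum_eq_zero_iff_of_nonneg (fun _ _ => by positivity)] at h2
    have := h2 i (Finset.mem_univ _)
    simp at this
    simp [this, Matrix.one_apply]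

lemma exists_unitary_col {n : ℕ} (u : Fin (n+1) → ℂ) (hu : ∑ i, star (u i) * u i = 1) :
    ∃ R : Matrix.unitaryGroup (Fin (n+1)) ℂ,
      ∀ i, (R : Matrix (Fin (n+1)) (Fin (n+1)) ℂ) i 0 = u i := by
  by_cases h0 : u 0 = 1
  · exact ⟨1, fun i => (eq_of_unit_of_zero u hu h0 i).symm⟩
  · exact ⟨⟨hrefl u, hrefl_mem u hu h0⟩, fun i => hrefl_col u h0 i⟩

/-- A unitary matrix with first column `e₀` is `1 ⊕ V`. -/
lemma exists_emb {n : ℕ} (G : Matrix.unitaryGroup (Fin (n+1)) ℂ)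
    (h : ∀ i, (G : Matrix (Fin (n+1)) (Fin (n+1)) ℂ) i 0
      = (1 : Matrix (Fin (n+1)) (Fin (n+1)) ℂ) i 0) :
    ∃ V : Matrix.unitaryGroup (Fin n) ℂ, emb V = G := by
  have hrow : ∀ j, (G : Matrix (Fin (n+1)) (Fin (n+1)) ℂ) 0 j
      = (1 : Matrix (Fin (n+1)) (Fin (n+1)) ℂ) 0 j := by
    intro j
    have := congrFun (congrFun (Matrix.mem_unitaryGroup_iff'.1 G.2) 0) j
    rw [← this, Matrix.mul_apply, Fin.sum_univ_succ]
    simp [Matrix.star_apply, h, Matrix.one_apply]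
  let V : Matrix (Fin n) (Fin n) ℂ := fun i j => (G : Matrix (Fin (n+1)) (Fin (n+1)) ℂ) i.succ j.succ
  have hV : embMat V = G := by
    ext i j
    refine Fin.cases ?_ (fun i => ?_) i <;> refine Fin.cases ?_ (fun j => ?_) j
    · simp [h]
    · simp [hrow, Matrix.one_apply, (Fin.succ_ne_zero _).symm]
    · simp [h, Matrix.one_apply]
    · rw [embMat_succ_succ]
  refine ⟨⟨V, ?_⟩, ?_⟩
  · rw [Matrix.mem_unitaryGroup_iff]
    apply embMat_injective
    rw [← embMat_mul, ← embMat_star, hV, embMat_one]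
    exact Matrix.mem_unitaryGroup_iff.1 G.2
  · apply Subtype.ext
    rw [coe_emb]; exact hV

lemma det_refl_emb {n M : ℕ} (h : M ≤ n) (u : Fin (n+1) → ℂ) (h0 : u 0 ≠ 1)
    (Y : Matrix (Fin n) (Fin n) ℂ) :
    Matrix.det ((1 : Matrix (Fin (M+1)) (Fin (M+1)) ℂ) -
      Matrix.submatrix (hrefl u * embMat Y) (Fin.castLE (Nat.succ_le_succ h))
        (Fin.castLE (Nat.succ_le_succ h)))
    = (1 - u 0) * Matrix.det ((1 : Matrix (Fin M) (Fin M) ℂ) -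
        Matrix.submatrix Y (Fin.castLE h) (Fin.castLE h)) := by
  have h1 : star (u 0 - 1) ≠ 0 := by
    rw [Ne, star_eq_zero, sub_eq_zero]; exact h0
  set x : Fin (n+1) → ℂ := u - Pi.single 0 1 with hx
  let z : Fin (n+1) → ℂ := fun j => (1 / star (u 0 - 1)) * ∑ a, star (x a) * embMat Y a j
  have hz0 : z 0 = 1 := by
    simp only [z, Fin.sum_univ_succ]
    simp [hx]
    rw [inv_mul_cancel₀]
    simpa using h1
  have hent : ∀ i j, (hrefl u * embMat Y) i j = embMat Y i j + x i * z j := by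
    intro i j
    rw [Matrix.mul_apply]
    simp only [hrefl_apply, ← hx, add_mul, Finset.sum_add_distrib, z, Finset.mul_sum]
    congr 1
    · simp [Matrix.one_apply]
    · exact Finset.sum_congr rfl fun a _ => by ring
  let ι : Fin (M+1) → Fin (n+1) := Fin.castLE (Nat.succ_le_succ h)
  have ι0 : ι 0 = 0 := rfl
  have ιs : ∀ j : Fin M, ι j.succ = (Fin.castLE h j).succ := fun j => rfl
  let B : Matrix (Fin (M+1)) (Fin (M+1)) ℂ := Matrix.of fun i j =>
    Fin.cases (- x (ι i)) (fun j => (1 : Matrix (Fin (M+1)) (Fin (M+1)) ℂ) i j.succ -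
      embMat Y (ι i) (ι j.succ)) j
  have hB0 : ∀ i, B i 0 = - x (ι i) := fun i => rfl
  have hBs : ∀ i (j : Fin M), B i j.succ = (1 : Matrix (Fin (M+1)) (Fin (M+1)) ℂ) i j.succ -
      embMat Y (ι i) (ι j.succ) := fun i j => rfl
  rw [← Matrix.det_transpose]
  rw [Matrix.det_eq_of_forall_row_eq_smul_add_const (B := Bᵀ)
    (fun j => Fin.cases 0 (fun j => z (ι j.succ)) j) 0 rfl, Matrix.det_transpose]
  · rw [Matrix.det_succ_row_zero, Fin.sum_univ_succ]
    rw [Finset.sum_eq_zero]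
    · have : B.submatrix Fin.succ (Fin.succAbove 0) = (1 : Matrix (Fin M) (Fin M) ℂ) -
        Matrix.submatrix Y (Fin.castLE h) (Fin.castLE h) := by
        ext i j
        simp [hBs, ιs, Matrix.one_apply]
      rw [this, hB0, ι0]
      simp [hx]
    · intro j _
      rw [hBs, ι0, ιs]
      simp [Matrix.one_apply, (Fin.succ_ne_zero _).symm]
  · intro j i
    simp only [Matrix.transpose_apply, Matrix.sub_apply, Matrix.submatrix_apply]
    rw [hent]
    change _ - (embMat Y (ι i) (ι j) + x (ι i) * z (ι j)) = _
    rw [hB0]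
    refine Fin.cases ?_ (fun j => ?_) j
    · rw [hB0, ι0, hz0]
      refine Fin.cases ?_ (fun i => ?_) i
      · simp [ι0]
      · simp [ιs, Matrix.one_apply]
    · rw [hBs]
      simp only [Fin.cases_succ]
      ring

lemma key_det {n : ℕ} (G : Matrix.unitaryGroup (Fin (n+1)) ℂ) :
    ∃ V : Matrix.unitaryGroup (Fin n) ℂ, ∀ (V' : Matrix.unitaryGroup (Fin n) ℂ) (M : ℕ)
      (h : M ≤ n) (h' : M + 1 ≤ n + 1),
      Matrix.det (1 - trunc (n+1) (M+1) h' (G * emb V'))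
        = (1 - (G : Matrix (Fin (n+1)) (Fin (n+1)) ℂ) 0 0) *
          Matrix.det (1 - trunc n M h (V * V')) := by
  set u : Fin (n+1) → ℂ := fun i => (G : Matrix (Fin (n+1)) (Fin (n+1)) ℂ) i 0 with hu
  have huu : ∑ i, star (u i) * u i = 1 := col_unit G 0
  by_cases h0 : u 0 = 1
  · refine ⟨1, fun V' M h h' => ?_⟩
    have e0 : (G : Matrix (Fin (n+1)) (Fin (n+1)) ℂ) 0 0 = 1 := h0
    rw [e0, sub_self, zero_mul]
    refine Matrix.det_eq_zero_of_column_eq_zero 0 fun i => ?_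
    have := eq_of_unit_of_zero u huu h0 (Fin.castLE h' i)
    simp only [hu] at this
    have e1 : (Fin.castLE h' (0 : Fin (M+1))) = 0 := rfl
    simp only [Matrix.sub_apply, trunc, Matrix.submatrix_apply, e1]
    rw [show ((G * emb V' : Matrix.unitaryGroup (Fin (n+1)) ℂ) : Matrix (Fin (n+1)) (Fin (n+1)) ℂ)
      = (G : Matrix (Fin (n+1)) (Fin (n+1)) ℂ) * embMat (V' : Matrix (Fin n) (Fin n) ℂ) from rfl,
      Matrix.mul_apply, Fin.sum_univ_succ]
    simp only [embMat_zero_zero, embMat_succ_zero, mul_one, mul_zero, Finset.sum_const_zero,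
      add_zero, this]
    refine Fin.cases ?_ (fun i => ?_) i
    · rw [e1]; simp
    · have : Fin.castLE h' i.succ = (Fin.castLE h i).succ := rfl
      rw [this]
      simp [Matrix.one_apply]
  · let R : Matrix.unitaryGroup (Fin (n+1)) ℂ := ⟨hrefl u, hrefl_mem u huu h0⟩
    obtain ⟨V, hV⟩ := exists_emb (R⁻¹ * G) (by
      have e : ∀ i, (G : Matrix (Fin (n+1)) (Fin (n+1)) ℂ) i 0
        = (R : Matrix (Fin (n+1)) (Fin (n+1)) ℂ) i 0 := fun i => (hrefl_col u h0 i).symm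
      intro i
      have h2 : ((R⁻¹ * R : Matrix.unitaryGroup (Fin (n+1)) ℂ) :
        Matrix (Fin (n+1)) (Fin (n+1)) ℂ) i 0 = (1 : Matrix (Fin (n+1)) (Fin (n+1)) ℂ) i 0 := by
        rw [inv_mul_cancel]; rfl
      rw [← h2]
      change ((R⁻¹ : Matrix.unitaryGroup (Fin (n+1)) ℂ).1 * G.1) i 0 =
        ((R⁻¹ : Matrix.unitaryGroup (Fin (n+1)) ℂ).1 * R.1) i 0
      rw [Matrix.mul_apply, Matrix.mul_apply]
      exact Finset.sum_congr rfl fun a _ => by rw [e])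
    refine ⟨V, fun V' M h h' => ?_⟩
    have hG : G = R * emb V := by rw [hV, mul_inv_cancel_left]
    have := det_refl_emb h u h0 ((V * V' : Matrix.unitaryGroup (Fin n) ℂ) : Matrix (Fin n) (Fin n) ℂ)
    have e2 : ((G * emb V' : Matrix.unitaryGroup (Fin (n+1)) ℂ) :
      Matrix (Fin (n+1)) (Fin (n+1)) ℂ) = hrefl u * embMat (V * V' : Matrix.unitaryGroup (Fin n) ℂ).1 := by
      rw [hG]
      change (hrefl u * embMat V.1) * embMat V'.1 = hrefl u * embMat (V.1 * V'.1)
      rw [Matrix.mul_assoc, embMat_mul]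
    unfold trunc
    rw [e2]
    exact this

end algebra

/-! ### Topology and Haar measure -/

section haar

instance unitary_borel (N : ℕ) : BorelSpace (Matrix.unitaryGroup (Fin N) ℂ) := ⟨rfl⟩

instance unitary_sc (N : ℕ) : SecondCountableTopology (Matrix.unitaryGroup (Fin N) ℂ) := by
  have : SecondCountableTopology (Matrix (Fin N) (Fin N) ℂ) :=
    inferInstanceAs (SecondCountableTopology (Fin N → Fin N → ℂ))
  exact TopologicalSpace.Subtype.secondCountableTopology _

instance unitary_compact (N : ℕ) : CompactSpace (Matrix.unitaryGroup (Fin N) ℂ) := by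
  have h1 : IsClosed (Matrix.unitaryGroup (Fin N) ℂ : Set (Matrix (Fin N) (Fin N) ℂ)) :=
    isClosed_unitary
  have h2 : IsCompact (Set.pi Set.univ fun _ : Fin N => Set.pi Set.univ fun _ : Fin N =>
      Metric.closedBall (0 : ℂ) 1) :=
    isCompact_univ_pi fun _ => isCompact_univ_pi fun _ => isCompact_closedBall _ _
  have h3 : IsCompact (Matrix.unitaryGroup (Fin N) ℂ : Set (Matrix (Fin N) (Fin N) ℂ)) := by
    refine IsCompact.of_isClosed_subset (X := Matrix (Fin N) (Fin N) ℂ) h2 h1 ?_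
    intro U hU i _ j _
    simpa using entry_norm_bound_of_unitary hU i j
  exact isCompact_iff_compactSpace.1 h3

instance unitary_t2 (N : ℕ) : T2Space (Matrix.unitaryGroup (Fin N) ℂ) := inferInstance

lemma exists_haar (N : ℕ) : ∃ ν : Measure (Matrix.unitaryGroup (Fin N) ℂ),
    ν.IsHaarMeasure ∧ IsProbabilityMeasure ν := by
  refine ⟨Measure.haarMeasure ⊤, inferInstance, ⟨?_⟩⟩
  exact Measure.haarMeasure_self (K₀ := ⊤)

lemma haar_map_mul_right {N : ℕ} (μ : Measure (Matrix.unitaryGroup (Fin N) ℂ))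
    [μ.IsHaarMeasure] [IsProbabilityMeasure μ] (g : Matrix.unitaryGroup (Fin N) ℂ) :
    Measure.map (fun x => x * g) μ = μ := by
  have hm : Measurable (fun x : Matrix.unitaryGroup (Fin N) ℂ => x * g) :=
    (continuous_id.mul continuous_const).measurable
  have : IsProbabilityMeasure (Measure.map (fun x => x * g) μ) :=
    Measure.isProbabilityMeasure_map hm.aemeasurable
  exact Measure.isHaarMeasure_eq_of_isProbabilityMeasure _ _

lemma continuous_entry {N : ℕ} (i j : Fin N) : Continuous
    (fun U : Matrix.unitaryGroup (Fin N) ℂ => (U : Matrix (Fin N) (Fin N) ℂ) i j) :=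
  (continuous_subtype_val.matrix_elem i j)

lemma continuous_det_trunc {N M : ℕ} (h : M ≤ N) : Continuous
    (fun U : Matrix.unitaryGroup (Fin N) ℂ => Matrix.det (1 - trunc N M h U)) := by
  refine Continuous.matrix_det ?_
  refine continuous_const.sub ?_
  exact continuous_subtype_val.matrix_submatrix _ _

lemma continuous_emb {n : ℕ} : Continuous (emb (n := n)) := by
  refine Continuous.subtype_mk ?_ _
  refine continuous_matrix fun i j => ?_
  refine Fin.cases ?_ (fun i => ?_) i <;> refine Fin.cases ?_ (fun j => ?_) j
  · simpa using continuous_const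
  · simpa using continuous_const
  · simpa using continuous_const
  · simpa using continuous_entry i j

/-- Recursion for the law of the determinant. -/
lemma lintegral_det_succ {n M : ℕ} (h : M ≤ n) (h' : M + 1 ≤ n + 1)
    (μ : Measure (Matrix.unitaryGroup (Fin (n+1)) ℂ)) [μ.IsHaarMeasure] [IsProbabilityMeasure μ]
    (ν : Measure (Matrix.unitaryGroup (Fin n) ℂ)) [ν.IsHaarMeasure] [IsProbabilityMeasure ν]
    (f : ℂ → ENNReal) (hf : Measurable f) :
    ∫⁻ U, f (Matrix.det (1 - trunc (n+1) (M+1) h' U)) ∂μ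
      = ∫⁻ U, ∫⁻ V, f ((1 - (U : Matrix (Fin (n+1)) (Fin (n+1)) ℂ) 0 0) *
          Matrix.det (1 - trunc n M h V)) ∂ν ∂μ := by
  have hF : Measurable (fun U => f (Matrix.det (1 - trunc (n+1) (M+1) h' U))) :=
    hf.comp (continuous_det_trunc h').measurable
  calc ∫⁻ U, f (Matrix.det (1 - trunc (n+1) (M+1) h' U)) ∂μ
      = ∫⁻ V', ∫⁻ U, f (Matrix.det (1 - trunc (n+1) (M+1) h' (U * emb V'))) ∂μ ∂ν := by
        have : ∀ V' : Matrix.unitaryGroup (Fin n) ℂ,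
          ∫⁻ U, f (Matrix.det (1 - trunc (n+1) (M+1) h' (U * emb V'))) ∂μ
            = ∫⁻ U, f (Matrix.det (1 - trunc (n+1) (M+1) h' U)) ∂μ := by
          intro V'
          conv_rhs => rw [← haar_map_mul_right μ (emb V')]
          have hm : Measurable (fun x : Matrix.unitaryGroup (Fin (n+1)) ℂ => x * emb V') :=
            (continuous_id.mul continuous_const).measurable
          rw [lintegral_map hF hm]
        simp [this]
    _ = ∫⁻ U, ∫⁻ V', f (Matrix.det (1 - trunc (n+1) (M+1) h' (U * emb V'))) ∂ν ∂μ := by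
        rw [lintegral_lintegral_swap]
        refine Measurable.aemeasurable ?_
        refine hF.comp ?_
        exact (continuous_snd.mul (continuous_emb.comp continuous_fst)).measurable
    _ = _ := by
        refine lintegral_congr fun U => ?_
        obtain ⟨V, hV⟩ := key_det U
        simp only [fun V' => hV V' M h h']
        exact lintegral_mul_left_eq_self (μ := ν) (fun V' => f ((1 -
          (U : Matrix (Fin (n+1)) (Fin (n+1)) ℂ) 0 0) * Matrix.det (1 - trunc n M h V'))) V

end haar

/-! ### Gaussian integrals -/

section gauss

lemma lintegral_pi_succ {α : Type} [MeasurableSpace α] {n : ℕ} (μ : Fin (n+1) → Measure α)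
    [∀ i, SigmaFinite (μ i)] (F : α × (Fin n → α) → ENNReal) :
    ∫⁻ x, F (x 0, fun j => x j.succ) ∂Measure.pi μ
      = ∫⁻ p, F p ∂((μ 0).prod (Measure.pi fun j => μ j.succ)) := by
  have := (measurePreserving_piFinSuccAbove μ 0).lintegral_comp_emb
    (MeasurableEquiv.measurableEmbedding _) F
  simp only [Fin.succAbove_zero] at this
  exact this

lemma map_norm_sq : Measure.map (fun z : ℂ => ‖z‖^2) volume
    = (NNReal.pi : ENNReal) • (volume : Measure ℝ).restrict (Set.Ioi 0) := by
  have hm : Measurable (fun z : ℂ => ‖z‖^2) := by fun_prop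
  have hI : ∀ a : ℝ, Measure.map (fun z : ℂ => ‖z‖^2) volume (Set.Iio a)
    = ENNReal.ofReal a * NNReal.pi := by
    intro a
    rw [Measure.map_apply hm measurableSet_Iio]
    have : (fun z : ℂ => ‖z‖^2) ⁻¹' (Set.Iio a) = Metric.ball 0 (√a) := by
      ext z
      simp [Real.lt_sqrt]
    rw [this, Complex.volume_ball]
    rcases le_total 0 a with h | h
    · rw [← ENNReal.ofReal_pow (Real.sqrt_nonneg _), Real.sq_sqrt h]
    · simp [Real.sqrt_eq_zero_of_nonpos h, ENNReal.ofReal_of_nonpos h]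
  refine Measure.ext_of_generateFrom_of_iUnion (Set.range Set.Iio) (fun n : ℕ => Set.Iio (n : ℝ))
    ?_ isPiSystem_Iio ?_ (fun i => ⟨_, rfl⟩) ?_ ?_
  · rw [← borel_eq_generateFrom_Iio]; exact BorelSpace.measurable_eq
  · ext x; simpa using exists_nat_gt x
  · intro i; rw [hI]; finiteness
  · rintro _ ⟨a, rfl⟩
    rw [hI, Measure.smul_apply, Measure.restrict_apply measurableSet_Iio, Set.Iio_inter_Ioi,
      Real.volume_Ioo, smul_eq_mul, mul_comm, sub_zero]

lemma lintegral_norm_sq (g : ℝ → ENNReal) (hg : Measurable g) :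
    ∫⁻ z : ℂ, g (‖z‖^2) = (NNReal.pi : ENNReal) * ∫⁻ x in Set.Ioi (0:ℝ), g x := by
  have hm : Measurable (fun z : ℂ => ‖z‖^2) := by fun_prop
  rw [← lintegral_map hg hm, map_norm_sq, lintegral_smul_measure, smul_eq_mul]

lemma pi_eq : (NNReal.pi : ENNReal) = ENNReal.ofReal Real.pi := by
  rw [ENNReal.ofReal, ← NNReal.coe_real_pi, Real.toNNReal_coe]

lemma lintegral_gauss_tail {a s : ℝ} (ha : 0 < a) (hs : 0 ≤ s) :
    ∫⁻ z : ℂ, (Set.Ioi s).indicator (fun y => ENNReal.ofReal (Real.exp (-a * y))) (‖z‖^2)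
      = ENNReal.ofReal (Real.pi / a * Real.exp (-a * s)) := by
  rw [lintegral_norm_sq _ ((by fun_prop : Measurable _).indicator measurableSet_Ioi),
    lintegral_indicator measurableSet_Ioi, Measure.restrict_restrict measurableSet_Ioi,
    Set.Ioi_inter_Ioi, max_eq_left hs, ← ofReal_integral_eq_lintegral_ofReal
      (integrableOn_exp_mul_Ioi (by linarith) s) (ae_of_all _ fun _ => (Real.exp_pos _).le),
    integral_exp_mul_Ioi (by linarith), pi_eq, ← ENNReal.ofReal_mul Real.pi_pos.le]
  congr 1
  field_simp

lemma lintegral_gauss {a : ℝ} (ha : 0 < a) :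
    ∫⁻ z : ℂ, ENNReal.ofReal (Real.exp (-a * ‖z‖^2)) = ENNReal.ofReal (Real.pi / a) := by
  have := lintegral_gauss_tail ha le_rfl
  simp only [mul_zero, Real.exp_zero, mul_one] at this
  rw [← this]
  refine lintegral_congr_ae ?_
  have h0 : ∀ᵐ z : ℂ, z ≠ 0 := by
    simp [ae_iff]
  filter_upwards [h0] with z hz
  rw [Set.indicator_of_mem]
  have : 0 < ‖z‖ := norm_pos_iff.2 hz
  simp only [Set.mem_Ioi]; positivity

lemma lintegral_gauss_pi {a : ℝ} (ha : 0 < a) (n : ℕ) :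
    ∫⁻ x : Fin n → ℂ, ENNReal.ofReal (Real.exp (-a * ∑ i, ‖x i‖^2))
      = ENNReal.ofReal ((Real.pi / a)^n) := by
  induction n with
  | zero => simp [volume_pi]
  | succ n ih =>
    have := lintegral_pi_succ (fun _ : Fin (n+1) => (volume : Measure ℂ))
      (fun p => ENNReal.ofReal (Real.exp (-a * ‖p.1‖^2)) *
        ENNReal.ofReal (Real.exp (-a * ∑ i, ‖p.2 i‖^2)))
    rw [lintegral_prod_mul (f := fun z : ℂ => ENNReal.ofReal (Real.exp (-a * ‖z‖^2)))
      (g := fun y : Fin n → ℂ => ENNReal.ofReal (Real.exp (-a * ∑ i, ‖y i‖^2)))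
      (by fun_prop) (by fun_prop : Measurable _).aemeasurable, lintegral_gauss ha] at this
    simp only [← volume_pi, ih] at this
    rw [pow_succ', ENNReal.ofReal_mul (by positivity), ← this]
    refine lintegral_congr fun x => ?_
    rw [← ENNReal.ofReal_mul (Real.exp_pos _).le, ← Real.exp_add, Fin.sum_univ_succ, mul_add]

/-- The test event in `ℂ^(n+1)`, with Gaussian weight. -/
def wt (n : ℕ) (t : ℝ) (x : Fin (n+1) → ℂ) : ENNReal :=
  {y : Fin (n+1) → ℂ | t * ∑ i, ‖y i‖^2 < ‖y 0‖^2}.indicator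
    (fun y => ENNReal.ofReal (Real.exp (-1 * ∑ i, ‖y i‖^2))) x

lemma measurable_wt (n : ℕ) (t : ℝ) : Measurable (wt n t) := by
  refine Measurable.indicator (by fun_prop) (measurableSet_lt (by fun_prop) (by fun_prop))

lemma lintegral_wt (n : ℕ) {t : ℝ} (ht : 0 ≤ t) (ht1 : t < 1) :
    ∫⁻ x, wt n t x = ENNReal.ofReal (Real.pi^(n+1) * (1-t)^n) := by
  let S : (Fin n → ℂ) → ℝ := fun y => ∑ i, ‖y i‖^2
  have hS : ∀ y, 0 ≤ S y := fun y => by positivity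
  have h1t : 0 < 1 - t := by linarith
  have hS' : Measurable S := by fun_prop
  let F : ℂ × (Fin n → ℂ) → ENNReal := fun p => ENNReal.ofReal (Real.exp (-1 * S p.2)) *
    (Set.Ioi (t/(1-t) * S p.2)).indicator (fun y => ENNReal.ofReal (Real.exp (-1 * y))) (‖p.1‖^2)
  have hF : Measurable F := by
    refine Measurable.mul (by fun_prop) ?_
    have : (fun p : ℂ × (Fin n → ℂ) => (Set.Ioi (t/(1-t) * S p.2)).indicator
      (fun y => ENNReal.ofReal (Real.exp (-1 * y))) (‖p.1‖^2)) =
      {p : ℂ × (Fin n → ℂ) | t/(1-t) * S p.2 < ‖p.1‖^2}.indicator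
        (fun p => ENNReal.ofReal (Real.exp (-1 * ‖p.1‖^2))) := by
      ext p
      simp [Set.indicator_apply]
    rw [this]
    exact Measurable.indicator (by fun_prop) (measurableSet_lt (by fun_prop) (by fun_prop))
  have e : ∀ x : Fin (n+1) → ℂ, wt n t x = F (x 0, fun j => x j.succ) := by
    intro x
    have hsum : ∑ i, ‖x i‖^2 = ‖x 0‖^2 + S (fun j => x j.succ) := Fin.sum_univ_succ _
    simp only [wt, F, Set.indicator_apply, Set.mem_ofPred_eq, Set.mem_Ioi, hsum]
    have hiff : t * (‖x 0‖^2 + S (fun j => x j.succ)) < ‖x 0‖^2 ↔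
      t / (1-t) * S (fun j => x j.succ) < ‖x 0‖^2 := by
      rw [div_mul_eq_mul_div, div_lt_iff₀ h1t]
      constructor <;> intro h <;> linarith
    rw [if_congr hiff rfl rfl]
    split_ifs with h
    · rw [← ENNReal.ofReal_mul (Real.exp_pos _).le, ← Real.exp_add]
      congr 2; ring
    · simp
  simp only [e]
  rw [volume_pi, lintegral_pi_succ, lintegral_prod_symm _ hF.aemeasurable]
  have inner : ∀ y : Fin n → ℂ, ∫⁻ z, F (z, y) = ENNReal.ofReal Real.pi *
      ENNReal.ofReal (Real.exp (-(1/(1-t)) * ∑ i, ‖y i‖^2)) := by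
    intro y
    simp only [F]
    rw [lintegral_const_mul' _ _ ENNReal.ofReal_ne_top, lintegral_gauss_tail one_pos
      (mul_nonneg (div_nonneg ht h1t.le) (hS y)), ← ENNReal.ofReal_mul (Real.exp_pos _).le,
      ← ENNReal.ofReal_mul Real.pi_pos.le]
    congr 1
    rw [div_one, mul_left_comm, ← Real.exp_add]
    congr 2
    change _ = -(1/(1-t)) * S y
    field_simp; ring
  simp only [inner]
  rw [← volume_pi, lintegral_const_mul' _ _ ENNReal.ofReal_ne_top,
    lintegral_gauss_pi (by positivity), ← ENNReal.ofReal_mul Real.pi_pos.le]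
  congr 1
  rw [div_div_eq_mul_div, div_one, mul_pow]; ring

lemma norm_mulVec {n : ℕ} (G : Matrix.unitaryGroup (Fin n) ℂ) (x : Fin n → ℂ) :
    ∑ i, ‖((G : Matrix (Fin n) (Fin n) ℂ) *ᵥ x) i‖^2 = ∑ i, ‖x i‖^2 := by
  have h : ∀ y : Fin n → ℂ, ((∑ i, ‖y i‖^2 : ℝ) : ℂ) = star y ⬝ᵥ y := by
    intro y
    push_cast
    refine Finset.sum_congr rfl fun i _ => ?_
    exact (Complex.conj_mul' _).symm
  have h2 : ((∑ i, ‖((G : Matrix (Fin n) (Fin n) ℂ) *ᵥ x) i‖^2 : ℝ) : ℂ)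
      = ((∑ i, ‖x i‖^2 : ℝ) : ℂ) := by
    rw [h, h, Matrix.star_mulVec, ← Matrix.dotProduct_mulVec, Matrix.mulVec_mulVec]
    have := Matrix.mem_unitaryGroup_iff'.1 G.2
    rw [Matrix.star_eq_conjTranspose] at this
    rw [this, Matrix.one_mulVec]
  exact_mod_cast h2

lemma map_unitary_volume {n : ℕ} (G : Matrix.unitaryGroup (Fin n) ℂ) :
    Measure.map (fun x : Fin n → ℂ => (G : Matrix (Fin n) (Fin n) ℂ) *ᵥ x) volume = volume := by
  let L : (Fin n → ℂ) →ₗ[ℝ] (Fin n → ℂ) :=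
    (Matrix.mulVecLin (G : Matrix (Fin n) (Fin n) ℂ)).restrictScalars ℝ
  have hL : ∀ x, L x = (G : Matrix (Fin n) (Fin n) ℂ) *ᵥ x := fun x => rfl
  let B : Set (Fin n → ℂ) := {x | ∑ i, ‖x i‖^2 < 1}
  have hBo : IsOpen B := isOpen_lt (by fun_prop) (by fun_prop)
  have hB0 : volume B ≠ 0 := (hBo.measure_pos volume ⟨0, by simp [B]⟩).ne'
  have hBt : volume B ≠ ⊤ := by
    have : B ⊆ Metric.closedBall 0 1 := by
      intro x hx
      rw [mem_closedBall_zero_iff, pi_norm_le_iff_of_nonneg zero_le_one]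
      intro i
      have h1 : ‖x i‖^2 ≤ ∑ i, ‖x i‖^2 :=
        Finset.single_le_sum (f := fun i => ‖x i‖^2) (fun _ _ => by positivity) (Finset.mem_univ i)
      have h2 : ∑ i, ‖x i‖^2 < 1 := hx
      nlinarith [norm_nonneg (x i)]
    exact ((measure_mono this).trans_lt measure_closedBall_lt_top).ne
  have himg : L '' B = B := by
    ext y
    constructor
    · rintro ⟨x, hx, rfl⟩
      change ∑ i, ‖(L x) i‖^2 < 1
      rw [hL, norm_mulVec]; exact hx
    · intro hy
      refine ⟨((G⁻¹ : Matrix.unitaryGroup (Fin n) ℂ) : Matrix (Fin n) (Fin n) ℂ) *ᵥ y, ?_, ?_⟩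
      · change ∑ i, ‖_‖^2 < 1
        rw [norm_mulVec]; exact hy
      · rw [hL, Matrix.mulVec_mulVec]
        have : (G : Matrix (Fin n) (Fin n) ℂ) *
          ((G⁻¹ : Matrix.unitaryGroup (Fin n) ℂ) : Matrix (Fin n) (Fin n) ℂ) = 1 :=
          congrArg Subtype.val (mul_inv_cancel G)
        rw [this, Matrix.one_mulVec]
  have hdet : ENNReal.ofReal |LinearMap.det L| = 1 := by
    have := Measure.addHaar_image_linearMap volume L B
    rw [himg] at this
    have h1 : 1 * volume B = ENNReal.ofReal |LinearMap.det L| * volume B := by rw [one_mul, ← this]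
    exact ((ENNReal.mul_left_inj hB0 hBt).1 h1).symm
  have hd : |LinearMap.det L| = 1 := by
    rwa [ENNReal.ofReal_eq_one] at hdet
  have hne : LinearMap.det L ≠ 0 := by
    intro h; rw [h] at hd; simp at hd
  have := Measure.map_linearMap_addHaar_eq_smul_addHaar (volume : Measure (Fin n → ℂ)) hne
  rw [abs_inv, hd, inv_one, ENNReal.ofReal_one, one_smul] at this
  exact this

lemma tail_haar {n : ℕ} (μ : Measure (Matrix.unitaryGroup (Fin (n+1)) ℂ)) [μ.IsHaarMeasure]
    [IsProbabilityMeasure μ] {t : ℝ} (ht : 0 ≤ t) (ht1 : t < 1) :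
    μ {U | t < ‖(U : Matrix (Fin (n+1)) (Fin (n+1)) ℂ) 0 0‖^2} = ENNReal.ofReal ((1-t)^n) := by
  set P := μ {U | t < ‖(U : Matrix (Fin (n+1)) (Fin (n+1)) ℂ) 0 0‖^2} with hP
  have hset : MeasurableSet {U : Matrix.unitaryGroup (Fin (n+1)) ℂ |
      t < ‖(U : Matrix (Fin (n+1)) (Fin (n+1)) ℂ) 0 0‖^2} :=
    (isOpen_lt continuous_const ((continuous_entry 0 0).norm.pow 2)).measurableSet
  have hcont : Continuous (fun p : (Matrix.unitaryGroup (Fin (n+1)) ℂ) × (Fin (n+1) → ℂ) =>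
      (p.1 : Matrix (Fin (n+1)) (Fin (n+1)) ℂ) *ᵥ p.2) :=
    (continuous_subtype_val.comp continuous_fst).matrix_mulVec continuous_snd
  have hA : ∫⁻ G, ∫⁻ x, wt n t ((G : Matrix (Fin (n+1)) (Fin (n+1)) ℂ) *ᵥ x) ∂volume ∂μ
      = ENNReal.ofReal (Real.pi^(n+1) * (1-t)^n) := by
    have : ∀ G : Matrix.unitaryGroup (Fin (n+1)) ℂ,
      ∫⁻ x, wt n t ((G : Matrix (Fin (n+1)) (Fin (n+1)) ℂ) *ᵥ x)
        = ENNReal.ofReal (Real.pi^(n+1) * (1-t)^n) := by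
      intro G
      rw [← lintegral_wt n ht ht1]
      conv_rhs => rw [← map_unitary_volume G]
      have hm : Measurable (fun x : Fin (n+1) → ℂ => (G : Matrix (Fin (n+1)) (Fin (n+1)) ℂ) *ᵥ x) :=
        (continuous_const.matrix_mulVec continuous_id).measurable
      rw [lintegral_map (measurable_wt n t) hm]
    simp [this]
  rw [lintegral_lintegral_swap (f := fun (G : Matrix.unitaryGroup (Fin (n+1)) ℂ) x =>
    wt n t ((G : Matrix (Fin (n+1)) (Fin (n+1)) ℂ) *ᵥ x))
    ((measurable_wt n t).comp hcont.measurable).aemeasurable] at hA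
  have hinner : ∀ x : Fin (n+1) → ℂ, x ≠ 0 →
      ∫⁻ G, wt n t (((G : Matrix.unitaryGroup (Fin (n+1)) ℂ) : Matrix (Fin (n+1)) (Fin (n+1)) ℂ) *ᵥ x) ∂μ
      = P * ENNReal.ofReal (Real.exp (-1 * ∑ i, ‖x i‖^2)) := by
    intro x hx
    set s := ∑ i, ‖x i‖^2 with hs
    have hs0 : 0 < s := by
      obtain ⟨i, hi⟩ := Function.ne_iff.1 hx
      have h1 : ‖x i‖^2 ≤ ∑ i, ‖x i‖^2 :=
        Finset.single_le_sum (f := fun i => ‖x i‖^2) (fun _ _ => by positivity) (Finset.mem_univ i)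
      have h2 : 0 < ‖x i‖ := norm_pos_iff.2 hi
      have : 0 < ‖x i‖^2 := by positivity
      linarith
    have hsq : 0 < √s := Real.sqrt_pos.2 hs0
    have hsq2 : √s ^ 2 = s := Real.sq_sqrt hs0.le
    obtain ⟨R, hR⟩ := exists_unitary_col (fun i => x i / (√s : ℂ)) (by
      have : ∀ i, star (x i / (√s : ℂ)) * (x i / (√s : ℂ)) = ((‖x i‖^2 / s : ℝ) : ℂ) := by
        intro i
        rw [show star (x i / (√s : ℂ)) = (starRingEnd ℂ) (x i / (√s : ℂ)) from rfl,
          Complex.conj_mul', norm_div, Complex.norm_real, Real.norm_of_nonneg hsq.le]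
        rw [← Complex.ofReal_pow, div_pow, hsq2]
      simp only [this]
      rw [← Complex.ofReal_sum, ← Finset.sum_div, ← hs, div_self hs0.ne', Complex.ofReal_one])
    have hent : ∀ G : Matrix.unitaryGroup (Fin (n+1)) ℂ,
        ((G : Matrix (Fin (n+1)) (Fin (n+1)) ℂ) *ᵥ x) 0 = (√s : ℂ) *
          ((G * R : Matrix.unitaryGroup (Fin (n+1)) ℂ) : Matrix (Fin (n+1)) (Fin (n+1)) ℂ) 0 0 := by
      intro G
      change _ = (√s : ℂ) * (G.1 * R.1) 0 0
      rw [Matrix.mul_apply, Matrix.mulVec, dotProduct, Finset.mul_sum]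
      refine Finset.sum_congr rfl fun i _ => ?_
      rw [hR]
      have : (√s : ℂ) ≠ 0 := by exact_mod_cast hsq.ne'
      field_simp
    have hw : ∀ G : Matrix.unitaryGroup (Fin (n+1)) ℂ,
        wt n t ((G : Matrix (Fin (n+1)) (Fin (n+1)) ℂ) *ᵥ x) =
        {U : Matrix.unitaryGroup (Fin (n+1)) ℂ |
          t < ‖(U : Matrix (Fin (n+1)) (Fin (n+1)) ℂ) 0 0‖^2}.indicator
          (fun _ => ENNReal.ofReal (Real.exp (-1 * s))) (G * R) := by
      intro G
      simp only [wt, Set.indicator_apply, Set.mem_ofPred_eq, norm_mulVec, ← hs]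
      refine if_congr ?_ rfl rfl
      rw [hent, norm_mul, mul_pow, Complex.norm_real, Real.norm_of_nonneg hsq.le, hsq2, mul_comm t,
        mul_lt_mul_iff_right₀ hs0]
    simp only [hw]
    have hm : Measurable (fun x : Matrix.unitaryGroup (Fin (n+1)) ℂ => x * R) :=
      (continuous_id.mul continuous_const).measurable
    rw [← lintegral_map (f := {U : Matrix.unitaryGroup (Fin (n+1)) ℂ |
          t < ‖(U : Matrix (Fin (n+1)) (Fin (n+1)) ℂ) 0 0‖^2}.indicator
          (fun _ => ENNReal.ofReal (Real.exp (-1 * s)))) (measurable_const.indicator hset) hm,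
      haar_map_mul_right, lintegral_indicator hset, lintegral_const, Measure.restrict_apply_univ,
      mul_comm]
  have hB : ∫⁻ x : Fin (n+1) → ℂ, ∫⁻ G, wt n t (((G : Matrix.unitaryGroup (Fin (n+1)) ℂ) :
      Matrix (Fin (n+1)) (Fin (n+1)) ℂ) *ᵥ x) ∂μ
      = P * ENNReal.ofReal (Real.pi^(n+1)) := by
    have := lintegral_gauss_pi one_pos (n+1)
    rw [div_one] at this
    rw [← this, ← lintegral_const_mul' _ _ (measure_ne_top _ _)]
    refine lintegral_congr_ae ?_
    have h0 : ∀ᵐ x : Fin (n+1) → ℂ, x ≠ 0 := by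
      simp [ae_iff]
    filter_upwards [h0] with x hx using hinner x hx
  rw [hB, ENNReal.ofReal_mul (by positivity), mul_comm] at hA
  exact (ENNReal.mul_right_inj (by positivity) ENNReal.ofReal_ne_top).1 hA

end gauss

/-! ### The law of the corner entry -/

section corner

instance sigmaFinite_beta (a b : ℝ) : SigmaFinite (betaMeasure a b) :=
  SigmaFinite.withDensity_ofReal _

instance isProb_unif : IsProbabilityMeasure uniformCircle := by
  refine ⟨?_⟩
  have h : ENNReal.ofReal (2 * Real.pi) ≠ 0 := by
    rw [Ne, ENNReal.ofReal_eq_zero, not_le]; positivity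
  simp only [uniformCircle, Measure.smul_apply, Measure.restrict_apply_univ, Real.volume_Ico,
    sub_zero, smul_eq_mul]
  exact ENNReal.inv_mul_cancel h ENNReal.ofReal_ne_top

lemma beta_apply (k : ℕ) (s : Set ℝ) (hs : MeasurableSet s) :
    betaMeasure 1 ((k:ℝ) + 1) s
      = ∫⁻ x in s ∩ Set.Ioo 0 1, ENNReal.ofReal ((k+1) * (1 - x)^k) := by
  have hG : Real.Gamma (1 + ((k:ℝ)+1)) / (Real.Gamma 1 * Real.Gamma ((k:ℝ)+1)) = k + 1 := by
    have h : Real.Gamma ((k:ℝ)+1) ≠ 0 := (Real.Gamma_pos_of_pos (by positivity)).ne'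
    rw [add_comm 1, Real.Gamma_add_one (by positivity), Real.Gamma_one, one_mul]
    field_simp
  have he : ∀ x : ℝ, ENNReal.ofReal ((Set.Ioo (0 : ℝ) 1).indicator
      (fun x => x ^ ((1:ℝ) - 1) * (1 - x) ^ (((k:ℝ)+1) - 1)
        * (Real.Gamma (1 + ((k:ℝ)+1)) / (Real.Gamma 1 * Real.Gamma ((k:ℝ)+1)))) x) =
      (Set.Ioo (0 : ℝ) 1).indicator (fun x => ENNReal.ofReal ((k+1) * (1 - x)^k)) x := by
    intro x
    rw [hG]
    simp only [Set.indicator_apply]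
    split_ifs with h
    · congr 1
      rw [sub_self, Real.rpow_zero, add_sub_cancel_right, Real.rpow_natCast]; ring
    · simp
  unfold betaMeasure
  rw [withDensity_apply _ hs]
  simp only [he]
  rw [lintegral_indicator measurableSet_Ioo, Measure.restrict_restrict measurableSet_Ioo,
    Set.inter_comm]

lemma lintegral_beta_Ioo (k : ℕ) {t : ℝ} (ht1 : t ≤ 1) :
    ∫⁻ x in Set.Ioo t 1, ENNReal.ofReal ((k+1) * (1 - x)^k) = ENNReal.ofReal ((1-t)^(k+1)) := by
  have hi : IntervalIntegrable (fun x : ℝ => ((k:ℝ)+1) * (1 - x)^k) volume t 1 :=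
    (by fun_prop : Continuous _).intervalIntegrable _ _
  have hval : ∫ x in t..1, ((k:ℝ)+1) * (1 - x)^k = (1-t)^(k+1) := by
    rw [intervalIntegral.integral_eq_sub_of_hasDerivAt (f := fun x => -(1-x)^(k+1)) _ hi]
    · simp
    · intro x _
      have := (((hasDerivAt_id x).const_sub 1).pow (k+1)).neg
      convert this using 1
      · ext y; simp
      · push_cast; simp
  rw [restrict_Ioo_eq_restrict_Ioc, ← ofReal_integral_eq_lintegral_ofReal, ← intervalIntegral.integral_of_le ht1,
    hval]
  · exact (intervalIntegrable_iff_integrableOn_Ioc_of_le ht1).1 hi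
  · refine (ae_restrict_iff' measurableSet_Ioc).2 (ae_of_all _ fun x hx => ?_)
    have : 0 ≤ 1 - x := by linarith [hx.2]
    simp only [Pi.zero_apply]
    positivity

lemma isProb_beta (k : ℕ) : IsProbabilityMeasure (betaMeasure 1 ((k:ℝ) + 1)) := by
  refine ⟨?_⟩
  rw [beta_apply k _ MeasurableSet.univ, Set.univ_inter, lintegral_beta_Ioo k zero_le_one]
  simp

lemma law_corner_sq {k : ℕ} (μ : Measure (Matrix.unitaryGroup (Fin (k+1+1)) ℂ)) [μ.IsHaarMeasure]
    [IsProbabilityMeasure μ] :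
    Measure.map (fun U : Matrix.unitaryGroup (Fin (k+1+1)) ℂ => ‖(U : Matrix (Fin (k+1+1)) (Fin (k+1+1)) ℂ) 0 0‖^2) μ
      = betaMeasure 1 ((k:ℝ)+1) := by
  have hm : Measurable (fun U : Matrix.unitaryGroup (Fin (k+1+1)) ℂ =>
      ‖(U : Matrix (Fin (k+1+1)) (Fin (k+1+1)) ℂ) 0 0‖^2) :=
    ((continuous_entry 0 0).norm.pow 2).measurable
  have := isProb_beta k
  have : IsProbabilityMeasure
      (Measure.map (fun U : Matrix.unitaryGroup (Fin (k+1+1)) ℂ => ‖(U : Matrix (Fin (k+1+1)) (Fin (k+1+1)) ℂ) 0 0‖^2) μ) :=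
    Measure.isProbabilityMeasure_map hm.aemeasurable
  refine ext_of_generate_finite (Set.range Set.Ioi) ?_ isPiSystem_Ioi ?_ (by simp)
  · rw [← borel_eq_generateFrom_Ioi]; exact BorelSpace.measurable_eq
  rintro _ ⟨t, rfl⟩
  have main : ∀ t : ℝ, 0 ≤ t → t < 1 →
      Measure.map (fun U : Matrix.unitaryGroup (Fin (k+1+1)) ℂ => ‖(U : Matrix (Fin (k+1+1)) (Fin (k+1+1)) ℂ) 0 0‖^2) μ (Set.Ioi t)
        = ENNReal.ofReal ((1-t)^(k+1)) := by
    intro t ht ht1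
    rw [Measure.map_apply hm measurableSet_Ioi]
    exact tail_haar μ ht ht1
  have main2 : ∀ t : ℝ, 0 ≤ t → t < 1 → betaMeasure 1 ((k:ℝ)+1) (Set.Ioi t)
      = ENNReal.ofReal ((1-t)^(k+1)) := by
    intro t ht ht1
    rw [beta_apply k _ measurableSet_Ioi, ← lintegral_beta_Ioo k ht1.le]
    congr 2
    ext x
    simp only [Set.mem_inter_iff, Set.mem_Ioi, Set.mem_Ioo]
    constructor
    · rintro ⟨h1, _, h2⟩; exact ⟨h1, h2⟩
    · rintro ⟨h1, h2⟩; exact ⟨h1, by linarith, h2⟩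
  rcases lt_or_ge t 0 with h | h
  · have hsub : Set.Ioi (0:ℝ) ⊆ Set.Ioi t := Set.Ioi_subset_Ioi h.le
    have e1 := main 0 le_rfl one_pos
    have e2 := main2 0 le_rfl one_pos
    simp only [sub_zero, one_pow, ENNReal.ofReal_one] at e1 e2
    rw [le_antisymm prob_le_one (e1 ▸ measure_mono hsub),
      le_antisymm prob_le_one (e2 ▸ measure_mono hsub)]
  rcases lt_or_ge t 1 with h1 | h1
  · rw [main t h h1, main2 t h h1]
  · rw [Measure.map_apply hm measurableSet_Ioi, beta_apply k _ measurableSet_Ioi]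
    have e1 : Set.Ioi t ∩ Set.Ioo (0:ℝ) 1 = ∅ := by
      ext x
      simp only [Set.mem_inter_iff, Set.mem_Ioi, Set.mem_Ioo, Set.mem_empty_iff_false, iff_false]
      rintro ⟨h2, _, h3⟩; linarith
    have e2 : (fun U : Matrix.unitaryGroup (Fin (k+1+1)) ℂ =>
      ‖(U : Matrix (Fin (k+1+1)) (Fin (k+1+1)) ℂ) 0 0‖^2) ⁻¹' (Set.Ioi t) = ∅ := by
      ext U
      simp only [Set.mem_preimage, Set.mem_Ioi, Set.mem_empty_iff_false, iff_false, not_lt]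
      have := entry_norm_bound_of_unitary U.2 0 0
      have h2 := norm_nonneg ((U : Matrix (Fin (k+1+1)) (Fin (k+1+1)) ℂ) 0 0)
      nlinarith
    rw [e1, e2]; simp

lemma lintegral_unif_rot (f : ℂ → ENNReal) (z : ℂ) :
    ∫⁻ ω, f (Complex.exp (Complex.I * (ω : ℝ)) * z) ∂uniformCircle
      = ∫⁻ ω, f (Complex.exp (Complex.I * (ω : ℝ)) * (‖z‖ : ℂ)) ∂uniformCircle := by
  have hpi : 0 < 2 * Real.pi := by positivity
  let g : ℝ → ENNReal := fun ω => f (Complex.exp (Complex.I * (ω : ℝ)) * (‖z‖ : ℂ))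
  have hper : Function.Periodic g (2 * Real.pi) := by
    intro ω
    simp only [g]
    congr 2
    push_cast
    rw [mul_add, Complex.exp_add, show Complex.I * (2 * (Real.pi : ℂ)) = 2 * Real.pi * Complex.I by ring,
      Complex.exp_two_pi_mul_I, mul_one]
  have e1 : ∀ ω : ℝ, f (Complex.exp (Complex.I * (ω : ℝ)) * z) = g (ω + Complex.arg z) := by
    intro ω
    simp only [g]
    congr 1
    conv_lhs => rw [← Complex.norm_mul_exp_arg_mul_I z]
    push_cast
    rw [mul_add, Complex.exp_add, mul_comm Complex.I (Complex.arg z : ℂ)]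
    ring
  simp only [e1]
  change _ = ∫⁻ ω, g ω ∂uniformCircle
  unfold uniformCircle
  rw [lintegral_smul_measure, lintegral_smul_measure]
  congr 1
  rw [restrict_Ico_eq_restrict_Ioc]
  set φ := Complex.arg z
  have h1 : ∫⁻ ω in Set.Ioc 0 (2 * Real.pi), g (ω + φ)
      = ∫⁻ ω in Set.Ioc φ (φ + 2 * Real.pi), g ω := by
    have := (measurePreserving_add_right (volume : Measure ℝ) φ).setLIntegral_comp_emb
      (measurableEmbedding_addRight φ) g (Set.Ioc 0 (2 * Real.pi))
    rw [this, Set.image_add_const_Ioc, zero_add, add_comm φ]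
  have h2 := (isAddFundamentalDomain_Ioc hpi φ volume).setLIntegral_eq
    (isAddFundamentalDomain_Ioc hpi 0 volume) g hper.map_vadd_zmultiples
  rw [zero_add] at h2
  rw [h1, h2]

/-- scalar unitary -/
def scal {n : ℕ} (ω : ℝ) : Matrix.unitaryGroup (Fin n) ℂ :=
  ⟨Complex.exp (Complex.I * (ω : ℝ)) • (1 : Matrix (Fin n) (Fin n) ℂ), by
    rw [Matrix.mem_unitaryGroup_iff, star_smul, star_one, Matrix.smul_mul, Matrix.mul_smul,
      Matrix.one_mul, smul_smul]
    have : Complex.exp (Complex.I * (ω : ℝ)) * star (Complex.exp (Complex.I * (ω : ℝ))) = 1 := by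
      rw [show star (Complex.exp (Complex.I * (ω : ℝ))) =
        (starRingEnd ℂ) (Complex.exp (Complex.I * (ω : ℝ))) from rfl, ← Complex.exp_conj,
        ← Complex.exp_add]
      simp
    rw [this, one_smul]⟩

lemma lintegral_corner {k : ℕ} (μ : Measure (Matrix.unitaryGroup (Fin (k+1+1)) ℂ)) [μ.IsHaarMeasure]
    [IsProbabilityMeasure μ] (f : ℂ → ENNReal) (hf : Measurable f) :
    ∫⁻ U, f ((U : Matrix (Fin (k+1+1)) (Fin (k+1+1)) ℂ) 0 0) ∂μ
      = ∫⁻ b, ∫⁻ ω, f (Complex.exp (Complex.I * (ω : ℝ)) * (√b : ℂ)) ∂uniformCircle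
          ∂(betaMeasure 1 ((k:ℝ)+1)) := by
  have hm : Measurable (fun U : Matrix.unitaryGroup (Fin (k+1+1)) ℂ =>
      ‖(U : Matrix (Fin (k+1+1)) (Fin (k+1+1)) ℂ) 0 0‖^2) :=
    ((continuous_entry 0 0).norm.pow 2).measurable
  have hjoint : Measurable (fun p : ℝ × ℝ => f (Complex.exp (Complex.I * (p.2 : ℝ)) * (√p.1 : ℂ))) := by
    refine hf.comp (Continuous.measurable ?_)
    fun_prop
  calc ∫⁻ U, f ((U : Matrix (Fin (k+1+1)) (Fin (k+1+1)) ℂ) 0 0) ∂μ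
      = ∫⁻ ω, ∫⁻ U, f (Complex.exp (Complex.I * (ω : ℝ)) *
          ((U : Matrix.unitaryGroup (Fin (k+1+1)) ℂ) : Matrix (Fin (k+1+1)) (Fin (k+1+1)) ℂ) 0 0) ∂μ
          ∂uniformCircle := by
        have : ∀ ω : ℝ, ∫⁻ U, f (Complex.exp (Complex.I * (ω : ℝ)) *
          ((U : Matrix.unitaryGroup (Fin (k+1+1)) ℂ) : Matrix (Fin (k+1+1)) (Fin (k+1+1)) ℂ) 0 0) ∂μ
          = ∫⁻ U, f ((U : Matrix (Fin (k+1+1)) (Fin (k+1+1)) ℂ) 0 0) ∂μ := by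
          intro ω
          rw [← lintegral_mul_left_eq_self (μ := μ) (fun U : Matrix.unitaryGroup (Fin (k+1+1)) ℂ =>
            f ((U : Matrix (Fin (k+1+1)) (Fin (k+1+1)) ℂ) 0 0)) (scal ω)]
          refine lintegral_congr fun U => ?_
          congr 1
          change _ = ((Complex.exp (Complex.I * (ω : ℝ)) •
            (1 : Matrix (Fin (k+1+1)) (Fin (k+1+1)) ℂ)) * U.1) 0 0
          rw [Matrix.smul_mul, Matrix.one_mul, Matrix.smul_apply, smul_eq_mul]
        simp [this]
    _ = ∫⁻ U, ∫⁻ ω, f (Complex.exp (Complex.I * (ω : ℝ)) *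
          ((U : Matrix.unitaryGroup (Fin (k+1+1)) ℂ) : Matrix (Fin (k+1+1)) (Fin (k+1+1)) ℂ) 0 0)
          ∂uniformCircle ∂μ := by
        rw [lintegral_lintegral_swap]
        refine Measurable.aemeasurable ?_
        refine hf.comp (Continuous.measurable ?_)
        exact Continuous.mul (by fun_prop) ((continuous_entry 0 0).comp continuous_snd)
    _ = ∫⁻ U, ∫⁻ ω, f (Complex.exp (Complex.I * (ω : ℝ)) *
          (√(‖((U : Matrix.unitaryGroup (Fin (k+1+1)) ℂ) : Matrix (Fin (k+1+1)) (Fin (k+1+1)) ℂ) 0 0‖^2) : ℂ))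
          ∂uniformCircle ∂μ := by
        refine lintegral_congr fun U => ?_
        rw [lintegral_unif_rot, Real.sqrt_sq (norm_nonneg _)]
    _ = _ := by
        rw [← law_corner_sq μ, lintegral_map _ hm]
        exact hjoint.lintegral_prod_right'

end corner

/-! ### The main induction -/

/-- The statement in terms of lower integrals. -/
lemma main_aux (M : ℕ) : ∀ (N : ℕ) (hMN : M < N)
    (μ : Measure (Matrix.unitaryGroup (Fin N) ℂ))
    [μ.IsHaarMeasure] [IsProbabilityMeasure μ] (f : ℂ → ENNReal) (_hf : Measurable f),
    ∫⁻ U, f (Matrix.det ((1 : Matrix (Fin M) (Fin M) ℂ) - trunc N M hMN.le U)) ∂μ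
    = ∫⁻ b, ∫⁻ ω, f (∏ l : Fin M, ((1 : ℂ) - Complex.exp (Complex.I * ((ω l : ℝ) : ℂ)) *
        (Real.sqrt (b l) : ℂ)))
        ∂(Measure.pi fun _ : Fin M => uniformCircle)
        ∂(Measure.pi fun l : Fin M => betaMeasure 1 ((N : ℝ) - ((l : ℕ) + 1))) := by
  induction M with
  | zero =>
    intro N hMN μ _ _ f hf
    simp
  | succ M ih =>
    intro N hMN μ _ _ f hf
    obtain ⟨k, rfl⟩ : ∃ k, N = k + 1 + 1 := ⟨N - 2, by omega⟩
    have hM : M < k + 1 := by omega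
    obtain ⟨ν, hν1, hν2⟩ := exists_haar (k+1)
    rw [lintegral_det_succ hM.le hMN.le μ ν f hf]
    -- the recursion
    let g : ℂ → ENNReal := fun z => ∫⁻ V, f ((1 - z) * Matrix.det (1 - trunc (k+1) M hM.le V)) ∂ν
    have hg : Measurable g := by
      have : Measurable (fun p : ℂ × Matrix.unitaryGroup (Fin (k+1)) ℂ =>
        f ((1 - p.1) * Matrix.det (1 - trunc (k+1) M hM.le p.2))) := by
        refine hf.comp (Continuous.measurable ?_)
        exact (continuous_const.sub continuous_fst).mul
          ((continuous_det_trunc hM.le).comp continuous_snd)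
      exact this.lintegral_prod_right'
    have h1 := lintegral_corner μ g hg
    simp only [g] at h1
    rw [h1]
    have h2 : ∀ z : ℂ, ∫⁻ V, f ((1 - z) * Matrix.det (1 - trunc (k+1) M hM.le V)) ∂ν
      = ∫⁻ b, ∫⁻ ω, f ((1 - z) * ∏ l : Fin M, ((1 : ℂ) -
        Complex.exp (Complex.I * ((ω l : ℝ) : ℂ)) * (Real.sqrt (b l) : ℂ)))
        ∂(Measure.pi fun _ : Fin M => uniformCircle)
        ∂(Measure.pi fun l : Fin M => betaMeasure 1 (((k+1 : ℕ) : ℝ) - ((l : ℕ) + 1))) :=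
      fun z => ih (k+1) hM ν (fun w => f ((1 - z) * w)) (hf.comp (by fun_prop))
    simp only [h2]
    -- split the right-hand side
    let B : Measure (Fin M → ℝ) :=
      Measure.pi fun l : Fin M => betaMeasure 1 (((k+1 : ℕ) : ℝ) - ((l : ℕ) + 1))
    let W : Measure (Fin M → ℝ) := Measure.pi fun _ : Fin M => uniformCircle
    let Φ : (ℝ × ℝ) × ((Fin M → ℝ) × (Fin M → ℝ)) → ENNReal := fun p =>
      f ((1 - Complex.exp (Complex.I * ((p.1.2 : ℝ) : ℂ)) * (√p.1.1 : ℂ)) *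
        ∏ l : Fin M, ((1 : ℂ) -
        Complex.exp (Complex.I * ((p.2.2 l : ℝ) : ℂ)) * (Real.sqrt (p.2.1 l) : ℂ)))
    have hΦ : Measurable Φ := by
      refine hf.comp (Continuous.measurable ?_)
      fun_prop
    change ∫⁻ b0, ∫⁻ ω0, ∫⁻ b, ∫⁻ ω, Φ ((b0, ω0), (b, ω)) ∂W ∂B ∂uniformCircle
      ∂(betaMeasure 1 ((k:ℝ)+1)) = _
    have hB : (Measure.pi fun l : Fin M => betaMeasure 1 (((k+1+1 : ℕ) : ℝ) -
        (((l.succ : Fin (M+1)) : ℕ) + 1))) = B := by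
      congr 1
      ext1 l
      congr 1
      rw [Fin.val_succ]
      push_cast; ring
    have hb0 : betaMeasure 1 (((k+1+1 : ℕ) : ℝ) - (((0 : Fin (M+1)) : ℕ) + 1))
        = betaMeasure 1 ((k:ℝ)+1) := by
      congr 1
      push_cast; simp
    have hR1 : ∀ b : Fin (M+1) → ℝ, ∫⁻ ω, f (∏ l : Fin (M+1), ((1 : ℂ) -
        Complex.exp (Complex.I * ((ω l : ℝ) : ℂ)) * (Real.sqrt (b l) : ℂ)))
        ∂(Measure.pi fun _ : Fin (M+1) => uniformCircle)
        = ∫⁻ q, Φ ((b 0, q.1), (fun j => b j.succ, q.2)) ∂(uniformCircle.prod W) := by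
      intro b
      rw [← lintegral_pi_succ (fun _ : Fin (M+1) => uniformCircle)
        (fun q => Φ ((b 0, q.1), (fun j => b j.succ, q.2)))]
      refine lintegral_congr fun ω => ?_
      simp only [Φ]
      rw [Fin.prod_univ_succ]
    simp only [hR1]
    rw [lintegral_pi_succ _ (fun p : ℝ × (Fin M → ℝ) => ∫⁻ q, Φ ((p.1, q.1), (p.2, q.2))
      ∂(uniformCircle.prod W)), hB, hb0]
    have hm4 : Measurable (fun p : (ℝ × (Fin M → ℝ)) × (ℝ × (Fin M → ℝ)) =>
      Φ ((p.1.1, p.2.1), (p.1.2, p.2.2))) := hΦ.comp (by fun_prop)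
    rw [lintegral_prod _ (hm4.lintegral_prod_right').aemeasurable]
    refine lintegral_congr fun b0 => ?_
    have e : ∀ b, ∫⁻ q, Φ ((b0, q.1), (b, q.2)) ∂(uniformCircle.prod W)
      = ∫⁻ ω0, ∫⁻ ω, Φ ((b0, ω0), (b, ω)) ∂W ∂uniformCircle := by
      intro b
      refine lintegral_prod _ (Measurable.aemeasurable ?_)
      exact hΦ.comp (by fun_prop)
    simp only [e]
    rw [lintegral_lintegral_swap]
    refine Measurable.aemeasurable ?_
    have hm5 : Measurable (fun p : (ℝ × (Fin M → ℝ)) × (Fin M → ℝ) =>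
      Φ ((b0, p.1.1), (p.1.2, p.2))) := hΦ.comp (by fun_prop)
    exact hm5.lintegral_prod_right'

theorem law_det_one_sub_truncated_unitary
    (M N : ℕ) (hM : 1 ≤ M) (hMN : M < N)
    (μ : Measure (Matrix.unitaryGroup (Fin N) ℂ))
    [μ.IsHaarMeasure] [IsProbabilityMeasure μ] :
    Measure.map (fun U =>
        Matrix.det ((1 : Matrix (Fin M) (Fin M) ℂ) - trunc N M hMN.le U)) μ
    = Measure.map (fun p : (Fin M → ℝ) × (Fin M → ℝ) =>
        ∏ l : Fin M, ((1 : ℂ) - Complex.exp (Complex.I * p.1 l) * (Real.sqrt (p.2 l) : ℂ)))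
        ((Measure.pi fun _ : Fin M => uniformCircle).prod
          (Measure.pi fun l : Fin M => betaMeasure 1 ((N : ℝ) - ((l : ℕ) + 1)))) := by
  have hc : Continuous (fun p : (Fin M → ℝ) × (Fin M → ℝ) =>
        ∏ l : Fin M, ((1 : ℂ) - Complex.exp (Complex.I * p.1 l) * (Real.sqrt (p.2 l) : ℂ))) := by
    fun_prop
  refine Measure.ext_of_lintegral _ fun f hf => ?_
  rw [lintegral_map hf (continuous_det_trunc hMN.le).measurable, lintegral_map hf hc.measurable]
  have hfm : Measurable (fun p : (Fin M → ℝ) × (Fin M → ℝ) => f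
        (∏ l : Fin M, ((1 : ℂ) - Complex.exp (Complex.I * p.1 l) * (Real.sqrt (p.2 l) : ℂ)))) :=
    hf.comp hc.measurable
  rw [lintegral_prod_symm _ hfm.aemeasurable]
  exact main_aux M N hMN μ f hf
end
end
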